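/- For any ψ > ψ↓(κ), the system of equations in (c₁,c₂,s): −c₁ = E_μ[A·W²·X^{1/2}/D], c₁² + c₂² = E_μ[(ψ·X + A²·W²·X)/D²], 1 = E_μ[(ψ + A²·W²)/D²] — where A = ∂₁F_κ(c₁,c₂) − c₁c₂^{−1}∂₂F_κ(c₁,c₂), D = c₂^{−1}∂₂F_κ(c₁,c₂)·X^{1/2} + ψ^{1/2}·s·X^{−1/2}, and (X,W) ~ μ — has a unique solution (c₁(ψ,κ), c₂(ψ,κ), s(ψ,κ)) ∈ ℝ × (0,∞) × (0,∞). Moreover, the functions T, c₁, c₂, s are continuous on the domain {(ψ,κ) : κ > 0, ψ > ψ↓(κ)}, where T(ψ,κ) = ψ^{−1/2}·(F_κ(c₁,c₂) − c₁·∂₁F_κ(c₁,c₂) − c₂·∂₂F_κ(c₁,c₂)) − s evaluated at the unique solution. -/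

import Mathlib

open MeasureTheory ProbabilityTheory Real Filter Set Topology

noncomputable section

namespace MaxMargin

/-- The standard Gaussian measure on `ℝ`. -/
def stdG : Measure ℝ := gaussianReal 0 1

/-- The function `F_κ(c₁,c₂) = (E[((κ − c₁·Y·G − c₂·Z)₊)²])^{1/2}` where `G, Z` are independent
standard Gaussians and, conditionally on `G`, `Y ∈ {+1,−1}` with `P(Y = +1 | G) = f(G)`. -/
def Fk (f : ℝ → ℝ) (κ c₁ c₂ : ℝ) : ℝ :=
  Real.sqrt (∫ g, ∫ z,
    (f g * (max (κ - c₁ * g - c₂ * z) 0) ^ 2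
      + (1 - f g) * (max (κ + c₁ * g - c₂ * z) 0) ^ 2) ∂stdG ∂stdG)

/-- Non-degeneracy of `f`: the variable `T = Y·G` satisfies `P(T < x) > 0` and `P(T > x) > 0`
for every `x ∈ ℝ`. -/
def NonDeg (f : ℝ → ℝ) : Prop :=
  ∀ x : ℝ,
    (0 < ∫ g, (f g * (if g < x then (1:ℝ) else 0)
          + (1 - f g) * (if -g < x then (1:ℝ) else 0)) ∂stdG) ∧
    (0 < ∫ g, (f g * (if x < g then (1:ℝ) else 0)
          + (1 - f g) * (if x < -g then (1:ℝ) else 0)) ∂stdG)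


/-- Points of `ℝ³` carrying the coordinates `(G, X, W)`. -/
abbrev Pt : Type := ℝ × ℝ × ℝ

/-- First coordinate `G`. -/
def Gc : Pt → ℝ := fun q => q.1

/-- Second coordinate `X`. -/
def Xc : Pt → ℝ := fun q => q.2.1

/-- Third coordinate `W`. -/
def Wc : Pt → ℝ := fun q => q.2.2

/-- The inner product `⟨h₁,h₂⟩_P = E_P[h₁h₂]`. -/
def ip (P : Measure Pt) (h₁ h₂ : Pt → ℝ) : ℝ := ∫ q, h₁ q * h₂ q ∂P

/-- The norm `‖h‖_P = ⟨h,h⟩_P^{1/2}`. -/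
def pnorm (P : Measure Pt) (h : Pt → ℝ) : ℝ := Real.sqrt (ip P h h)

/-- Projection onto the orthogonal complement of `W`: `Π_{W⊥}(h) = h − ⟨h,W⟩_P·W`. -/
def projW (P : Measure Pt) (h : Pt → ℝ) : Pt → ℝ := fun q => h q - ip P h Wc * Wc q

/-- Partial derivative of `F_κ` in its first argument. -/
def d1F (f : ℝ → ℝ) (κ c₁ c₂ : ℝ) : ℝ := deriv (fun t => Fk f κ t c₂) c₁

/-- Partial derivative of `F_κ` in its second argument. -/
def d2F (f : ℝ → ℝ) (κ c₁ c₂ : ℝ) : ℝ := deriv (fun t => Fk f κ c₁ t) c₂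

/-- `ψ*(0) = min_{c ∈ ℝ} F₀(c,1)²`. -/
def psiStar0 (f : ℝ → ℝ) : ℝ := ⨅ c : ℝ, (Fk f 0 c 1) ^ 2

/-- The functional `𝓡_{ψ,κ,P}(h) = ψ^{−1/2}·F_κ(⟨h, X^{1/2}W⟩_P, ‖Π_{W⊥}(X^{1/2}h)‖_P)
+ ⟨h, X^{1/2}·Π_{W⊥}(G)⟩_P`. -/
def Rfun (f : ℝ → ℝ) (P : Measure Pt) (ψ κ : ℝ) (h : Pt → ℝ) : ℝ :=
  (Real.sqrt ψ)⁻¹ *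
      Fk f κ (ip P h (fun q => Real.sqrt (Xc q) * Wc q))
        (pnorm P (projW P (fun q => Real.sqrt (Xc q) * h q)))
    + ip P h (fun q => Real.sqrt (Xc q) * projW P Gc q)

/-- `ζ(P) = ‖X^{−1/2}W‖_P^{−1}`. -/
def zetaP (P : Measure Pt) : ℝ := (pnorm P (fun q => (Real.sqrt (Xc q))⁻¹ * Wc q))⁻¹

/-- `ζ = (E_μ[X⁻¹W²])^{−1/2}` for `(X,W) ~ μ`. -/
def zetaMu (μ : Measure (ℝ × ℝ)) : ℝ := (Real.sqrt (∫ q, (q.1)⁻¹ * q.2 ^ 2 ∂μ))⁻¹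

/-- `ω = (E_μ[(1 − ζ²X⁻¹)²W²])^{1/2}`. -/
def omegaMu (μ : Measure (ℝ × ℝ)) : ℝ :=
  Real.sqrt (∫ q, (1 - (zetaMu μ) ^ 2 * (q.1)⁻¹) ^ 2 * q.2 ^ 2 ∂μ)

/-- `ψ₊(κ)`. -/
def psiPlus (f : ℝ → ℝ) (μ : Measure (ℝ × ℝ)) (κ : ℝ) : ℝ :=
  if 0 < d1F f κ (zetaMu μ) 0 then 0
  else (d2F f κ (zetaMu μ) 0) ^ 2 - (omegaMu μ) ^ 2 * (d1F f κ (zetaMu μ) 0) ^ 2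

/-- `ψ₋(κ)`. -/
def psiMinus (f : ℝ → ℝ) (μ : Measure (ℝ × ℝ)) (κ : ℝ) : ℝ :=
  if 0 < d1F f κ (-(zetaMu μ)) 0 then 0
  else (d2F f κ (-(zetaMu μ)) 0) ^ 2 - (omegaMu μ) ^ 2 * (d1F f κ (-(zetaMu μ)) 0) ^ 2

/-- `ψ↓(κ) = max{ψ*(0), ψ₊(κ), ψ₋(κ)}`. -/
def psiDown (f : ℝ → ℝ) (μ : Measure (ℝ × ℝ)) (κ : ℝ) : ℝ :=
  max (max (psiStar0 f) (psiPlus f μ κ)) (psiMinus f μ κ)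

/-- The system of equations with expectations over `(X,W) ~ μ`:
with `A = ∂₁F_κ(c₁,c₂) − c₁c₂⁻¹∂₂F_κ(c₁,c₂)` and
`D = c₂⁻¹∂₂F_κ(c₁,c₂)·X^{1/2} + ψ^{1/2}·s·X^{−1/2}`,
`−c₁ = E_μ[A·W²·X^{1/2}/D]`, `c₁² + c₂² = E_μ[(ψX + A²W²X)/D²]`, `1 = E_μ[(ψ + A²W²)/D²]`. -/
def SolSysMu (f : ℝ → ℝ) (μ : Measure (ℝ × ℝ)) (ψ κ c₁ c₂ s : ℝ) : Prop :=
  (-c₁ = ∫ q, (d1F f κ c₁ c₂ - c₁ * c₂⁻¹ * d2F f κ c₁ c₂) * q.2 ^ 2 * Real.sqrt q.1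
      / (c₂⁻¹ * d2F f κ c₁ c₂ * Real.sqrt q.1 + Real.sqrt ψ * s * (Real.sqrt q.1)⁻¹) ∂μ)
  ∧ (c₁ ^ 2 + c₂ ^ 2 = ∫ q,
      (ψ * q.1 + (d1F f κ c₁ c₂ - c₁ * c₂⁻¹ * d2F f κ c₁ c₂) ^ 2 * q.2 ^ 2 * q.1)
      / (c₂⁻¹ * d2F f κ c₁ c₂ * Real.sqrt q.1 + Real.sqrt ψ * s * (Real.sqrt q.1)⁻¹) ^ 2 ∂μ)
  ∧ (1 = ∫ q,
      (ψ + (d1F f κ c₁ c₂ - c₁ * c₂⁻¹ * d2F f κ c₁ c₂) ^ 2 * q.2 ^ 2)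
      / (c₂⁻¹ * d2F f κ c₁ c₂ * Real.sqrt q.1 + Real.sqrt ψ * s * (Real.sqrt q.1)⁻¹) ^ 2 ∂μ)

/-- `T(ψ,κ) = ψ^{−1/2}(F_κ(c₁,c₂) − c₁∂₁F_κ(c₁,c₂) − c₂∂₂F_κ(c₁,c₂)) − s`. -/
def Tval (f : ℝ → ℝ) (ψ κ c₁ c₂ s : ℝ) : ℝ :=
  (Real.sqrt ψ)⁻¹ * (Fk f κ c₁ c₂ - c₁ * d1F f κ c₁ c₂ - c₂ * d2F f κ c₁ c₂) - s

/-! ### Abstract Hilbert space part -/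

/-- Existence of a solution of the variational inequality on the unit ball for a continuous
subgradient selection. -/
lemma exists_vi {H : Type*} [NormedAddCommGroup H] [InnerProductSpace ℝ H] [CompleteSpace H]
    (J : H → ℝ) (N : H → H) (hN : Continuous N)
    (hJ : ∀ h k, J h + inner ℝ (N h) (k - h) ≤ J k) :
    ∃ k : H, ‖k‖ ≤ 1 ∧ ∀ v : H, ‖v‖ ≤ 1 → 0 ≤ inner ℝ (N k) (v - k) := by
  classical
  -- the infimum
  have hbdd : BddBelow (J '' Metric.closedBall (0:H) 1) := by
    refine ⟨J 0 - ‖N 0‖, ?_⟩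
    rintro _ ⟨h, hh, rfl⟩
    have h1 := hJ 0 h
    have h2 : |inner ℝ (N 0) (h - 0)| ≤ ‖N 0‖ * ‖h - 0‖ := abs_real_inner_le_norm _ _
    have h3 : ‖h - 0‖ ≤ 1 := by simpa using hh
    have h4 := (abs_le.mp h2).1
    nlinarith [norm_nonneg (N 0)]
  have hne : (J '' Metric.closedBall (0:H) 1).Nonempty := ⟨J 0, 0, by simp, rfl⟩
  set m := sInf (J '' Metric.closedBall (0:H) 1) with hm
  have hmle : ∀ h, ‖h‖ ≤ 1 → m ≤ J h := fun h hh => csInf_le hbdd ⟨h, by simpa using hh, rfl⟩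
  have hseq : ∀ n : ℕ, ∃ h : H, ‖h‖ ≤ 1 ∧ J h < m + 1 / ((n:ℝ) + 1) := by
    intro n
    have hpos : m < m + 1 / ((n:ℝ) + 1) := by
      have : (0:ℝ) < 1 / ((n:ℝ) + 1) := by positivity
      linarith
    obtain ⟨_, ⟨h, hh, rfl⟩, hlt⟩ := exists_lt_of_csInf_lt hne hpos
    exact ⟨h, by simpa using hh, hlt⟩
  choose u hu1 hu2 using hseq
  let U : ℕ → WeakDual ℝ H := fun n => StrongDual.toWeakDual (InnerProductSpace.toDual ℝ H (u n))
  have hc := WeakDual.isCompact_closedBall (𝕜 := ℝ) (E := H) 0 1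
  let 𝓤 : Ultrafilter (WeakDual ℝ H) := (Filter.hyperfilter ℕ).map U
  have h𝓤 : (𝓤 : Filter (WeakDual ℝ H)) ≤ 𝓟 (WeakDual.toStrongDual ⁻¹' Metric.closedBall 0 1) := by
    rw [Filter.le_principal_iff]
    show U ⁻¹' _ ∈ (Filter.hyperfilter ℕ : Filter ℕ)
    refine Filter.univ_mem' ?_
    intro n
    have : ‖InnerProductSpace.toDual ℝ H (u n)‖ ≤ 1 := by
      rw [LinearIsometryEquiv.norm_map]; exact hu1 n
    simpa [U] using this
  obtain ⟨φ, hφmem, hφ⟩ := hc.ultrafilter_le_nhds 𝓤 h𝓤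
  have hT : Tendsto U (Filter.hyperfilter ℕ : Filter ℕ) (𝓝 φ) := hφ
  have hTv : ∀ v : H, Tendsto (fun n => inner ℝ (u n) v) (Filter.hyperfilter ℕ : Filter ℕ) (𝓝 (φ v)) := by
    intro v
    exact ((WeakDual.eval_continuous v).tendsto φ).comp hT
  let k : H := (InnerProductSpace.toDual ℝ H).symm (WeakDual.toStrongDual φ)
  have hk : ∀ v, inner ℝ k v = φ v := by
    intro v
    exact InnerProductSpace.toDual_symm_apply
  have hk1 : ‖k‖ ≤ 1 := by
    have : ‖WeakDual.toStrongDual φ‖ ≤ 1 := by simpa using hφmem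
    simpa [k] using this
  have hminty : ∀ h, ‖h‖ ≤ 1 → inner ℝ (N h) (k - h) ≤ 0 := by
    intro h hh
    have t1 : Tendsto (fun n => inner ℝ (N h) (u n - h)) (Filter.hyperfilter ℕ : Filter ℕ)
        (𝓝 (inner ℝ (N h) (k - h))) := by
      have := (hTv (N h)).sub_const (inner ℝ h (N h))
      rw [← hk] at this
      have e1 : inner ℝ (N h) (k - h) = inner ℝ k (N h) - inner ℝ h (N h) := by
        rw [inner_sub_right, real_inner_comm, real_inner_comm (N h) h]
      rw [e1]
      refine this.congr ?_
      intro n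
      rw [inner_sub_right, real_inner_comm, real_inner_comm (N h) h]
    have t2 : Tendsto (fun n : ℕ => 1 / ((n:ℝ) + 1)) (Filter.hyperfilter ℕ : Filter ℕ) (𝓝 0) :=
      (tendsto_one_div_add_atTop_nhds_zero_nat).mono_left (by
        rw [← Nat.cofinite_eq_atTop]; exact Filter.hyperfilter_le_cofinite)
    refine le_of_tendsto_of_tendsto' t1 t2 ?_
    intro n
    have a1 := hJ h (u n)
    have a2 := hmle h hh
    have a3 := hu2 n
    linarith
  refine ⟨k, hk1, ?_⟩
  intro v hv
  have hpath : Continuous (fun t : ℝ => inner ℝ (N (k + t • (v - k))) (v - k)) := by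
    have : Continuous (fun t : ℝ => N (k + t • (v - k))) := hN.comp (by fun_prop)
    exact this.inner continuous_const
  have hlim : Tendsto (fun t : ℝ => inner ℝ (N (k + t • (v - k))) (v - k)) (𝓝[>] 0)
      (𝓝 (inner ℝ (N k) (v - k))) := by
    have := (hpath.tendsto 0).mono_left (nhdsWithin_le_nhds (s := Ioi 0))
    simpa using this
  refine ge_of_tendsto hlim ?_
  have hmem : Ioo (0:ℝ) 1 ∈ 𝓝[>] (0:ℝ) := Ioo_mem_nhdsGT one_pos
  filter_upwards [hmem] with t ht
  have hball : ‖k + t • (v - k)‖ ≤ 1 := by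
    have e : k + t • (v - k) = (1 - t) • k + t • v := by
      rw [smul_sub, sub_smul, one_smul]; abel
    rw [e]
    calc _ ≤ ‖(1 - t) • k‖ + ‖t • v‖ := norm_add_le _ _
      _ = (1 - t) * ‖k‖ + t * ‖v‖ := by
        rw [norm_smul, norm_smul, Real.norm_of_nonneg (by linarith [ht.2]), Real.norm_of_nonneg ht.1.le]
      _ ≤ 1 := by nlinarith [ht.1, ht.2]
  have h1 := hminty _ hball
  have e2 : k - (k + t • (v - k)) = -(t • (v - k)) := by abel
  rw [e2, inner_neg_right, inner_smul_right] at h1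
  have h2 : 0 ≤ t * inner ℝ (N (k + t • (v - k))) (v - k) := by linarith
  exact nonneg_of_mul_nonneg_right h2 ht.1

lemma exists_kkt {H : Type*} [NormedAddCommGroup H] [InnerProductSpace ℝ H] [CompleteSpace H]
    (J : H → ℝ) (N : H → H) (hN : Continuous N)
    (hJ : ∀ h k, J h + inner ℝ (N h) (k - h) ≤ J k) :
    ∃ (k : H) (σ : ℝ), 0 ≤ σ ∧ N k = -(σ • k) ∧ (σ = 0 ∨ ‖k‖ = 1) := by
  obtain ⟨k, hk, hvi⟩ := exists_vi J N hN hJ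
  refine ⟨k, ‖N k‖, norm_nonneg _, ?_⟩
  by_cases h0 : N k = 0
  · simp [h0]
  have hpos : 0 < ‖N k‖ := norm_pos_iff.mpr h0
  have h1 := hvi (-(‖N k‖⁻¹ • N k)) (by
    rw [norm_neg, norm_smul, norm_inv, norm_norm, inv_mul_cancel₀ hpos.ne'])
  rw [inner_sub_right, inner_neg_right, inner_smul_right, real_inner_self_eq_norm_sq] at h1
  have e1 : ‖N k‖⁻¹ * ‖N k‖ ^ 2 = ‖N k‖ := by field_simp
  rw [e1] at h1
  have h2 := (abs_le.mp (abs_real_inner_le_norm (N k) k)).1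
  have h3 : ‖k‖ = 1 := by
    apply le_antisymm hk
    by_contra hlt
    push Not at hlt
    nlinarith
  have h4 : ‖N k + ‖N k‖ • k‖ ^ 2 ≤ 0 := by
    rw [norm_add_sq_real, inner_smul_right, norm_smul, norm_norm, h3]
    nlinarith
  have h5 : N k + ‖N k‖ • k = 0 := by
    have : ‖N k + ‖N k‖ • k‖ = 0 := by
      have := sq_nonneg ‖N k + ‖N k‖ • k‖
      exact pow_eq_zero_iff (two_ne_zero) |>.mp (le_antisymm h4 this)
    exact norm_eq_zero.mp this
  exact ⟨eq_neg_of_add_eq_zero_left h5, Or.inr h3⟩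

lemma unique_kkt {H : Type*} [NormedAddCommGroup H] [InnerProductSpace ℝ H]
    (J : H → ℝ) (N : H → H)
    (hJ : ∀ h k, J h + inner ℝ (N h) (k - h) ≤ J k) (h k : H) (σ τ : ℝ) (hσ : 0 < σ) (hτ : 0 < τ)
    (hh : N h = -(σ • h)) (hk : N k = -(τ • k)) (h1 : ‖h‖ = 1) (k1 : ‖k‖ = 1) : h = k := by
  have a1 := hJ h k
  have a2 := hJ k h
  rw [hh, inner_neg_left, inner_smul_left, inner_sub_right, real_inner_self_eq_norm_sq, h1] at a1
  rw [hk, inner_neg_left, inner_smul_left, inner_sub_right, real_inner_self_eq_norm_sq, k1,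
    real_inner_comm] at a2
  simp only [conj_trivial] at a1 a2
  have h3 : inner ℝ h k ≤ 1 := by
    have := real_inner_le_norm h k
    rw [h1, k1] at this; linarith
  have h4 : 1 ≤ inner ℝ h k := by
    by_contra hlt
    push Not at hlt
    nlinarith
  exact (inner_eq_one_iff_of_norm_eq_one h1 k1).mp (le_antisymm h3 h4)

section Functional
variable {H : Type*} [NormedAddCommGroup H] [InnerProductSpace ℝ H]

/-- first coordinate -/
def C1 (S : H →L[ℝ] H) (w : H) (h : H) : ℝ := inner ℝ (S h) w
/-- projected vector -/
def Pi1 (S : H →L[ℝ] H) (w : H) (h : H) : H := S h - C1 S w h • w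
/-- second coordinate -/
def C2 (S : H →L[ℝ] H) (w : H) (h : H) : ℝ := ‖Pi1 S w h‖
/-- the functional -/
def JJ (F : ℝ → ℝ → ℝ) (S : H →L[ℝ] H) (w g : H) (r : ℝ) (h : H) : ℝ :=
  F (C1 S w h) (C2 S w h) + r * inner ℝ (S h) g
/-- its gradient -/
def NN (F1 F2 : ℝ → ℝ → ℝ) (S : H →L[ℝ] H) (w g : H) (r : ℝ) (h : H) : H :=
  S (F1 (C1 S w h) (C2 S w h) • w
    + ((C2 S w h)⁻¹ * F2 (C1 S w h) (C2 S w h)) • Pi1 S w h + r • g)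

lemma JJ_subgrad (F F1 F2 : ℝ → ℝ → ℝ) (S : H →L[ℝ] H) (w g : H) (r : ℝ)
    (hS : ∀ x y, inner ℝ (S x) y = inner ℝ x (S y)) (hw : ‖w‖ = 1)
    (hF : ∀ a b a' b', F a b + F1 a b * (a' - a) + F2 a b * (b' - b) ≤ F a' b')
    (hF0 : ∀ a, F2 a 0 = 0) (hFp : ∀ a b, 0 ≤ b → 0 ≤ F2 a b) (h k : H) :
    JJ F S w g r h + inner ℝ (NN F1 F2 S w g r h) (k - h) ≤ JJ F S w g r k := by
  unfold JJ NN
  rw [hS (_ + _) (k - h), map_sub, inner_add_left, inner_add_left, inner_smul_left, inner_smul_left,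
    inner_smul_left]
  simp only [conj_trivial]
  have hww : inner ℝ w w = (1:ℝ) := by rw [real_inner_self_eq_norm_sq, hw]; norm_num
  have e1 : inner ℝ w (S k - S h) = C1 S w k - C1 S w h := by
    rw [inner_sub_right, real_inner_comm, real_inner_comm (S h) w]; rfl
  have e3 : inner ℝ g (S k - S h) = inner ℝ (S k) g - inner ℝ (S h) g := by
    rw [inner_sub_right, real_inner_comm, real_inner_comm (S h) g]
  have hPw : ∀ x, inner ℝ (Pi1 S w x) w = 0 := by
    intro x
    unfold Pi1
    rw [inner_sub_left, inner_smul_left, hww]; simp [C1]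
  have e2 : inner ℝ (Pi1 S w h) (S k - S h)
      = inner ℝ (Pi1 S w h) (Pi1 S w k) - (C2 S w h)^2 := by
    have hx : ∀ x, inner ℝ (Pi1 S w h) (S x) = inner ℝ (Pi1 S w h) (Pi1 S w x) := by
      intro x
      have hd : Pi1 S w x = S x - C1 S w x • w := rfl
      rw [hd, inner_sub_right, inner_smul_right, hPw]
      simp
    rw [inner_sub_right, hx, hx, real_inner_self_eq_norm_sq]; rfl
  have e4 : inner ℝ (Pi1 S w h) (Pi1 S w k) ≤ C2 S w h * C2 S w k := real_inner_le_norm _ _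
  rw [e1, e2, e3]
  have hc : 0 ≤ C2 S w h := norm_nonneg _
  have key := hF (C1 S w h) (C2 S w h) (C1 S w k) (C2 S w k)
  have e5 : (C2 S w h)⁻¹ * F2 (C1 S w h) (C2 S w h)
      * (inner ℝ (Pi1 S w h) (Pi1 S w k) - (C2 S w h)^2)
      ≤ F2 (C1 S w h) (C2 S w h) * (C2 S w k - C2 S w h) := by
    rcases hc.eq_or_lt with h0 | h0
    · rw [← h0, hF0]; simp
    · have hb := hFp (C1 S w h) _ hc
      have : (C2 S w h)⁻¹ * F2 (C1 S w h) (C2 S w h)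
        * (inner ℝ (Pi1 S w h) (Pi1 S w k) - (C2 S w h)^2) ≤
        (C2 S w h)⁻¹ * F2 (C1 S w h) (C2 S w h)
        * (C2 S w h * C2 S w k - (C2 S w h)^2) := by gcongr
      refine this.trans (le_of_eq ?_)
      field_simp
  nlinarith

lemma NN_continuous (F1 F2 : ℝ → ℝ → ℝ) (S : H →L[ℝ] H) (w g : H) (r : ℝ)
    (h1 : Continuous (fun q : ℝ × ℝ => F1 q.1 q.2)) (h2 : Continuous (fun q : ℝ × ℝ => F2 q.1 q.2))
    (hF0 : ∀ a, F2 a 0 = 0) : Continuous (NN F1 F2 S w g r) := by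
  have c1 : Continuous (C1 S w) := by unfold C1; fun_prop
  have cP : Continuous (Pi1 S w) := by unfold Pi1; fun_prop
  have c2 : Continuous (C2 S w) := by unfold C2; fun_prop
  have cF1 : Continuous (fun h => F1 (C1 S w h) (C2 S w h)) := h1.comp (c1.prodMk c2)
  have cF2 : Continuous (fun h => F2 (C1 S w h) (C2 S w h)) := h2.comp (c1.prodMk c2)
  have key : Continuous (fun h => ((C2 S w h)⁻¹ * F2 (C1 S w h) (C2 S w h)) • Pi1 S w h) := by
    rw [continuous_iff_continuousAt]
    intro h
    by_cases h0 : C2 S w h = 0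
    · have hv : ((C2 S w h)⁻¹ * F2 (C1 S w h) (C2 S w h)) • Pi1 S w h = 0 := by
        rw [h0]; simp
      simp only [ContinuousAt]
      rw [hv]
      have hz : Tendsto (fun h => |F2 (C1 S w h) (C2 S w h)|) (𝓝 h) (𝓝 0) := by
        have := (continuous_abs.comp cF2).tendsto h
        simpa [Function.comp_def, h0, hF0] using this
      refine squeeze_zero_norm ?_ hz
      intro k
      rw [norm_smul, norm_mul, norm_inv, Real.norm_eq_abs, Real.norm_eq_abs]
      have : ‖Pi1 S w k‖ = |C2 S w k| := by unfold C2; rw [abs_norm]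
      rw [this]
      by_cases hk : C2 S w k = 0
      · rw [hk]; simp
      · have : |C2 S w k| ≠ 0 := abs_ne_zero.mpr hk
        apply le_of_eq; field_simp
    · exact ((c2.continuousAt.inv₀ h0).mul cF2.continuousAt).smul cP.continuousAt
  unfold NN
  exact S.continuous.comp (((cF1.smul continuous_const).add key).add continuous_const)

end Functional

/-! ### Cone projections in a Hilbert space -/

section Cone
variable {E : Type*} [NormedAddCommGroup E] [InnerProductSpace ℝ E] (φ : E → E)

lemma cone_firm (p1 : ∀ x y, inner ℝ x (φ y) ≤ inner ℝ (φ x) (φ y))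
    (p2 : ∀ y, inner ℝ y (φ y) = ‖φ y‖ ^ 2) (x y : E) :
    ‖φ x - φ y‖ ^ 2 ≤ inner ℝ (x - y) (φ x - φ y) := by
  rw [norm_sub_sq_real, inner_sub_left, inner_sub_right, inner_sub_right, p2, p2]
  have h1 := p1 x y
  have h2 := p1 y x
  rw [real_inner_comm] at h2
  have h3 : inner ℝ (φ y) (φ x) = inner ℝ (φ x) (φ y) := real_inner_comm _ _
  have h4 : inner ℝ y (φ x) = inner ℝ (φ x) y := real_inner_comm _ _
  linarith

lemma cone_lip (p1 : ∀ x y, inner ℝ x (φ y) ≤ inner ℝ (φ x) (φ y))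
    (p2 : ∀ y, inner ℝ y (φ y) = ‖φ y‖ ^ 2) (x y : E) :
    ‖φ x - φ y‖ ≤ ‖x - y‖ := by
  have h1 := cone_firm φ p1 p2 x y
  have h2 := real_inner_le_norm (x - y) (φ x - φ y)
  by_contra hlt
  push Not at hlt
  have := norm_nonneg (x - y)
  nlinarith

/-- a function with a continuous subgradient selection is differentiable -/
lemma hasDerivAt_of_subgrad (G g : ℝ → ℝ) (hg : Continuous g)
    (h : ∀ x y, G x + g x * (y - x) ≤ G y) (x : ℝ) : HasDerivAt G (g x) x := by
  rw [hasDerivAt_iff_isLittleO, Asymptotics.isLittleO_iff]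
  intro c hc
  have : ∀ᶠ y in 𝓝 x, |g y - g x| < c := by
    have := Metric.tendsto_nhds.mp (hg.tendsto x) c hc
    simpa [Real.dist_eq] using this
  filter_upwards [this] with y hy
  rw [Real.norm_eq_abs, Real.norm_eq_abs, smul_eq_mul]
  have h1 := h x y
  have h2 := h y x
  have h3 : 0 ≤ G y - G x - (y - x) * g x := by linarith
  rw [abs_of_nonneg h3]
  have h4 : G y - G x - (y - x) * g x ≤ (g y - g x) * (y - x) := by linarith
  calc _ ≤ (g y - g x) * (y - x) := h4
    _ ≤ |(g y - g x) * (y - x)| := le_abs_self _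
    _ = |g y - g x| * |y - x| := abs_mul _ _
    _ ≤ c * |y - x| := by gcongr

end Cone

/-! ### The Gaussian `L²` space -/

instance : IsProbabilityMeasure stdG := by unfold stdG; infer_instance

instance : Measure.IsOpenPosMeasure stdG := by
  unfold stdG
  exact (gaussianReal_absolutelyContinuous' 0 one_ne_zero).isOpenPosMeasure

lemma stdG_neg : MeasurePreserving (fun x : ℝ => -x) stdG stdG := by
  refine ⟨measurable_neg, ?_⟩
  unfold stdG
  rw [gaussianReal_map_neg]; simp

/-- product Gaussian -/
abbrev G2 : Measure (ℝ × ℝ) := stdG.prod stdG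

lemma G2_neg : MeasurePreserving (fun q : ℝ × ℝ => (q.1, -q.2)) G2 G2 :=
  (MeasurePreserving.id stdG).prod stdG_neg

lemma memLp_fst : MemLp (fun q : ℝ × ℝ => q.1) 2 G2 := by
  have : MemLp id 2 stdG := memLp_id_gaussianReal 2
  exact this.comp_fst stdG

lemma memLp_snd : MemLp (fun q : ℝ × ℝ => q.2) 2 G2 := by
  have : MemLp id 2 stdG := memLp_id_gaussianReal 2
  exact this.comp_snd stdG

/-- density of `T` -/
def rho (f : ℝ → ℝ) (t : ℝ) : ℝ := f t + 1 - f (-t)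

/-- `√ρ` -/
def srho (f : ℝ → ℝ) (q : ℝ × ℝ) : ℝ := Real.sqrt (rho f q.1)

lemma rho_nonneg {f : ℝ → ℝ} (h : ∀ x, f x ∈ Icc (0:ℝ) 1) (t : ℝ) : 0 ≤ rho f t := by
  unfold rho; linarith [(h t).1, (h (-t)).2]

lemma rho_le {f : ℝ → ℝ} (h : ∀ x, f x ∈ Icc (0:ℝ) 1) (t : ℝ) : rho f t ≤ 2 := by
  unfold rho; linarith [(h t).2, (h (-t)).1]

lemma srho_cont {f : ℝ → ℝ} (hf : Continuous f) : Continuous (srho f) := by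
  unfold srho rho; fun_prop

lemma srho_bdd {f : ℝ → ℝ} (h : ∀ x, f x ∈ Icc (0:ℝ) 1) (q : ℝ × ℝ) : ‖srho f q‖ ≤ 2 := by
  unfold srho
  rw [Real.norm_of_nonneg (Real.sqrt_nonneg _), Real.sqrt_le_left (by norm_num)]
  linarith [rho_le h q.1]

lemma memLp_srho_mul {f : ℝ → ℝ} (hf : Continuous f) (h : ∀ x, f x ∈ Icc (0:ℝ) 1)
    {u : ℝ × ℝ → ℝ} (hu : MemLp u 2 G2) : MemLp (fun q => srho f q * u q) 2 G2 := by
  refine MemLp.of_le_mul (c := 2) hu ((srho_cont hf).aestronglyMeasurable.mul hu.1) ?_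
  refine ae_of_all _ fun q => ?_
  rw [norm_mul]
  gcongr
  exact srho_bdd h q

/-- the linear form -/
def lf (κ c₁ c₂ : ℝ) (q : ℝ × ℝ) : ℝ := κ - c₁ * q.1 - c₂ * q.2

lemma memLp_lf (κ c₁ c₂ : ℝ) : MemLp (lf κ c₁ c₂) 2 G2 := by
  unfold lf
  exact ((memLp_const κ).sub (memLp_fst.const_mul c₁)).sub (memLp_snd.const_mul c₂)

lemma memLp_plf (κ c₁ c₂ : ℝ) : MemLp (fun q => max (lf κ c₁ c₂ q) 0) 2 G2 :=
  (memLp_lf κ c₁ c₂).pos_part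

/-- the `L²` vector -/
def xv {f : ℝ → ℝ} (hf : Continuous f) (h : ∀ x, f x ∈ Icc (0:ℝ) 1) (κ c₁ c₂ : ℝ) : Lp ℝ 2 G2 :=
  (memLp_srho_mul hf h (memLp_lf κ c₁ c₂)).toLp

/-- the `T` vector -/
def tV {f : ℝ → ℝ} (hf : Continuous f) (h : ∀ x, f x ∈ Icc (0:ℝ) 1) : Lp ℝ 2 G2 :=
  (memLp_srho_mul hf h memLp_fst).toLp
/-- the `Z` vector -/
def zV {f : ℝ → ℝ} (hf : Continuous f) (h : ∀ x, f x ∈ Icc (0:ℝ) 1) : Lp ℝ 2 G2 :=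
  (memLp_srho_mul hf h memLp_snd).toLp
/-- the constant vector -/
def eV {f : ℝ → ℝ} (hf : Continuous f) (h : ∀ x, f x ∈ Icc (0:ℝ) 1) : Lp ℝ 2 G2 :=
  (memLp_srho_mul hf h (memLp_const (1:ℝ))).toLp

section
variable {f : ℝ → ℝ} (hf : Continuous f) (h : ∀ x, f x ∈ Icc (0:ℝ) 1)

lemma xv_eq (κ c₁ c₂ : ℝ) : xv hf h κ c₁ c₂ = κ • eV hf h - c₁ • tV hf h - c₂ • zV hf h := by
  unfold xv eV tV zV
  rw [← MemLp.toLp_const_smul, ← MemLp.toLp_const_smul, ← MemLp.toLp_const_smul,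
    ← MemLp.toLp_sub, ← MemLp.toLp_sub]
  rw [MemLp.toLp_eq_toLp_iff]
  refine ae_of_all _ fun q => ?_
  simp [lf]
  ring

lemma posPart_xv (κ c₁ c₂ : ℝ) :
    ⇑(Lp.posPart (xv hf h κ c₁ c₂)) =ᵐ[G2] fun q => srho f q * max (lf κ c₁ c₂ q) 0 := by
  filter_upwards [Lp.coeFn_posPart (xv hf h κ c₁ c₂),
    (memLp_srho_mul hf h (memLp_lf κ c₁ c₂)).coeFn_toLp] with q h1 h2
  rw [h1]
  unfold xv
  have h0 : 0 ≤ srho f q := Real.sqrt_nonneg _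
  rw [h2, mul_max_of_nonneg _ _ h0, mul_zero]

lemma pp1 (x y : Lp ℝ 2 G2) :
    inner ℝ x (Lp.posPart y) ≤ inner ℝ (Lp.posPart x) (Lp.posPart y) := by
  rw [L2.inner_def, L2.inner_def]
  refine integral_mono_ae (L2.integrable_inner _ _) (L2.integrable_inner _ _) ?_
  filter_upwards [Lp.coeFn_posPart x, Lp.coeFn_posPart y] with q h1 h2
  rw [h1, h2]
  simp only [RCLike.inner_apply, conj_trivial]
  gcongr
  exact le_max_left _ _

lemma pp2 (y : Lp ℝ 2 G2) :
    inner ℝ y (Lp.posPart y) = ‖Lp.posPart y‖ ^ 2 := by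
  rw [← real_inner_self_eq_norm_sq, L2.inner_def, L2.inner_def]
  refine integral_congr_ae ?_
  filter_upwards [Lp.coeFn_posPart y] with q h2
  rw [h2]
  simp only [RCLike.inner_apply, conj_trivial]
  rcases le_total (y q) 0 with h | h
  · simp [h]
  · simp [h]

/-- norm of the positive part -/
def Fv (κ c₁ c₂ : ℝ) : ℝ := ‖Lp.posPart (xv hf h κ c₁ c₂)‖

lemma Fv_sq (κ c₁ c₂ : ℝ) :
    Fv hf h κ c₁ c₂ ^ 2 = ∫ q, rho f q.1 * (max (lf κ c₁ c₂ q) 0) ^ 2 ∂G2 := by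
  unfold Fv
  rw [← real_inner_self_eq_norm_sq, L2.inner_def]
  refine integral_congr_ae ?_
  filter_upwards [posPart_xv hf h κ c₁ c₂] with q hq
  rw [hq]
  simp only [RCLike.inner_apply, conj_trivial]
  have : srho f q * srho f q = rho f q.1 := Real.mul_self_sqrt (rho_nonneg h _)
  rw [← this]; ring

lemma Fk_eq (κ c₁ c₂ : ℝ) : Fk f κ c₁ c₂ = Fv hf h κ c₁ c₂ := by
  have hn : 0 ≤ Fv hf h κ c₁ c₂ := norm_nonneg _
  unfold Fk
  rw [← Real.sqrt_sq hn, Fv_sq]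
  congr 1
  set m : ℝ × ℝ → ℝ := fun q => (max (lf κ c₁ c₂ q) 0) ^ 2 with hm
  have hmi : Integrable m G2 := (memLp_plf κ c₁ c₂).integrable_sq
  have hidG : MemLp (fun z : ℝ => z) 2 stdG := memLp_id_gaussianReal 2
  have hmz : ∀ g, Integrable (fun z => m (g, z)) stdG := by
    intro g
    have h1 : MemLp (fun z : ℝ => max (lf κ c₁ c₂ (g, z)) 0) 2 stdG := by
      refine MemLp.pos_part ?_
      unfold lf
      exact (memLp_const (κ - c₁ * g)).sub (hidG.const_mul c₂)
    exact h1.integrable_sq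
  set I : ℝ → ℝ := fun g => ∫ z, m (g, z) ∂stdG with hI
  have hIi : Integrable I stdG := hmi.integral_prod_left
  have hIneg : Integrable (fun g => I (-g)) stdG :=
    stdG_neg.integrable_comp_of_integrable hIi
  have hfb : ∀ x, ‖f x‖ ≤ 1 := fun x => by
    rw [Real.norm_of_nonneg (h x).1]; exact (h x).2
  have hfb' : ∀ x, ‖1 - f x‖ ≤ 1 := fun x => by
    rw [Real.norm_of_nonneg (by linarith [(h x).2])]; linarith [(h x).1]
  have i1 : Integrable (fun g => f g * I g) stdG :=
    hIi.bdd_mul (c := 1) hf.aestronglyMeasurable (ae_of_all _ hfb)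
  have i2 : Integrable (fun g => (1 - f g) * I (-g)) stdG :=
    hIneg.bdd_mul (c := 1) (by fun_prop) (ae_of_all _ hfb')
  have i3 : Integrable (fun g => (1 - f (-g)) * I g) stdG :=
    hIi.bdd_mul (c := 1) (by fun_prop) (ae_of_all _ fun x => hfb' _)
  have e1 : ∀ g, (∫ z, (f g * (max (κ - c₁ * g - c₂ * z) 0) ^ 2
      + (1 - f g) * (max (κ + c₁ * g - c₂ * z) 0) ^ 2) ∂stdG) = f g * I g + (1 - f g) * I (-g) := by
    intro g
    have : (fun z => (f g * (max (κ - c₁ * g - c₂ * z) 0) ^ 2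
      + (1 - f g) * (max (κ + c₁ * g - c₂ * z) 0) ^ 2)) =
      fun z => f g * m (g, z) + (1 - f g) * m (-g, z) := by
      funext z; simp [hm, lf]
    rw [this, integral_add ((hmz g).const_mul _) ((hmz (-g)).const_mul _), integral_const_mul,
      integral_const_mul]
  have e2 : ∫ g, (1 - f g) * I (-g) ∂stdG = ∫ g, (1 - f (-g)) * I g ∂stdG := by
    have := stdG_neg.integral_comp (MeasurableEquiv.neg ℝ).measurableEmbedding
      (fun g => (1 - f (-g)) * I g)
    simpa using this
  simp_rw [e1]
  rw [integral_add i1 i2, e2, ← integral_add i1 i3]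
  have hri : Integrable (fun q : ℝ × ℝ => rho f q.1 * m q) G2 := by
    refine hmi.bdd_mul (c := 2) ?_ (ae_of_all _ fun q => ?_)
    · apply Continuous.aestronglyMeasurable; unfold rho; fun_prop
    · rw [Real.norm_of_nonneg (rho_nonneg h _)]; exact rho_le h _
  rw [integral_prod _ hri]
  congr 1
  funext g
  simp only
  rw [integral_const_mul]
  unfold rho
  simp only [hI]
  ring

lemma Fv_pos {κ : ℝ} (hκ : 0 < κ) (c₁ c₂ : ℝ) : 0 < Fv hf h κ c₁ c₂ := by
  refine lt_of_le_of_ne (norm_nonneg _) fun h0 => ?_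
  have h1 : Lp.posPart (xv hf h κ c₁ c₂) = 0 := norm_eq_zero.mp h0.symm
  have h2 : (fun q => srho f q * max (lf κ c₁ c₂ q) 0) =ᵐ[G2] fun _ => 0 := by
    refine (posPart_xv hf h κ c₁ c₂).symm.trans ?_
    rw [h1]; exact Lp.coeFn_zero _ _ _
  have hc : Continuous (fun q => srho f q * max (lf κ c₁ c₂ q) 0) := by
    have := srho_cont hf
    unfold lf; fun_prop
  have h3 := (hc.ae_eq_iff_eq G2 continuous_const).mp h2
  have h4 := congrFun h3 (0, 0)
  simp [srho, rho, lf, hκ.le] at h4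
  linarith

/-- numerators of the derivatives -/
def B1 (κ c₁ c₂ : ℝ) : ℝ := inner ℝ (tV hf h) (Lp.posPart (xv hf h κ c₁ c₂))
/-- numerators of the derivatives -/
def B2 (κ c₁ c₂ : ℝ) : ℝ := inner ℝ (zV hf h) (Lp.posPart (xv hf h κ c₁ c₂))

lemma ppc : Continuous (fun q : ℝ × ℝ × ℝ => Lp.posPart (xv hf h q.1 q.2.1 q.2.2)) := by
  refine Lp.continuous_posPart.comp ?_
  simp_rw [xv_eq]
  fun_prop

lemma Fv_cont : Continuous (fun q : ℝ × ℝ × ℝ => Fv hf h q.1 q.2.1 q.2.2) := (ppc hf h).norm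
lemma B1_cont : Continuous (fun q : ℝ × ℝ × ℝ => B1 hf h q.1 q.2.1 q.2.2) :=
  continuous_const.inner (ppc hf h)
lemma B2_cont : Continuous (fun q : ℝ × ℝ × ℝ => B2 hf h q.1 q.2.1 q.2.2) :=
  continuous_const.inner (ppc hf h)

lemma inner_xv (κ c₁ c₂ κ' c₁' c₂' : ℝ) :
    κ' * inner ℝ (eV hf h) (Lp.posPart (xv hf h κ c₁ c₂)) - c₁' * B1 hf h κ c₁ c₂
      - c₂' * B2 hf h κ c₁ c₂ ≤ Fv hf h κ' c₁' c₂' * Fv hf h κ c₁ c₂ := by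
  have h1 := pp1 (xv hf h κ' c₁' c₂') (xv hf h κ c₁ c₂)
  have h2 := real_inner_le_norm (Lp.posPart (xv hf h κ' c₁' c₂')) (Lp.posPart (xv hf h κ c₁ c₂))
  have h3 := h1.trans h2
  nth_rw 1 [xv_eq] at h3
  rw [inner_sub_left, inner_sub_left, inner_smul_left, inner_smul_left, inner_smul_left] at h3
  exact h3

lemma inner_xv_self (κ c₁ c₂ : ℝ) :
    κ * inner ℝ (eV hf h) (Lp.posPart (xv hf h κ c₁ c₂)) - c₁ * B1 hf h κ c₁ c₂
      - c₂ * B2 hf h κ c₁ c₂ = Fv hf h κ c₁ c₂ ^ 2 := by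
  have h3 := pp2 (xv hf h κ c₁ c₂)
  nth_rw 1 [xv_eq] at h3
  rw [inner_sub_left, inner_sub_left, inner_smul_left, inner_smul_left, inner_smul_left] at h3
  exact h3

lemma Fv_subgrad {κ : ℝ} (hκ : 0 < κ) (c₁ c₂ c₁' c₂' : ℝ) :
    Fv hf h κ c₁ c₂ + (-(B1 hf h κ c₁ c₂) / Fv hf h κ c₁ c₂) * (c₁' - c₁)
      + (-(B2 hf h κ c₁ c₂) / Fv hf h κ c₁ c₂) * (c₂' - c₂) ≤ Fv hf h κ c₁' c₂' := by
  have hp := Fv_pos hf h hκ c₁ c₂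
  have h1 := inner_xv hf h κ c₁ c₂ κ c₁' c₂'
  have h2 := inner_xv_self hf h κ c₁ c₂
  have e : Fv hf h κ c₁ c₂ + (-(B1 hf h κ c₁ c₂) / Fv hf h κ c₁ c₂) * (c₁' - c₁)
      + (-(B2 hf h κ c₁ c₂) / Fv hf h κ c₁ c₂) * (c₂' - c₂) =
      (Fv hf h κ c₁ c₂ ^ 2 - B1 hf h κ c₁ c₂ * (c₁' - c₁) - B2 hf h κ c₁ c₂ * (c₂' - c₂))
        / Fv hf h κ c₁ c₂ := by field_simp; ring
  rw [e, div_le_iff₀ hp]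
  linarith

lemma B2_odd (κ c₁ c₂ : ℝ) : B2 hf h κ c₁ (-c₂) = - B2 hf h κ c₁ c₂ := by
  have key : ∀ c, B2 hf h κ c₁ c = ∫ q, srho f q * q.2 * (srho f q * max (lf κ c₁ c q) 0) ∂G2 := by
    intro c
    unfold B2
    rw [L2.inner_def]
    refine integral_congr_ae ?_
    filter_upwards [posPart_xv hf h κ c₁ c, (memLp_srho_mul hf h memLp_snd).coeFn_toLp] with q h1 h2
    rw [h1]
    unfold zV
    rw [h2]
    simp only [RCLike.inner_apply, conj_trivial]
    ring
  rw [key, key, ← integral_neg]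
  have hemb : MeasurableEmbedding (fun q : ℝ × ℝ => (q.1, -q.2)) :=
    ((MeasurableEquiv.refl ℝ).prodCongr (MeasurableEquiv.neg ℝ)).measurableEmbedding
  rw [← G2_neg.integral_comp hemb]
  congr 1
  funext q
  simp [lf, srho]

lemma B2_bounds {κ c₁ c₂ : ℝ} (hc : 0 ≤ c₂) :
    0 ≤ -(B2 hf h κ c₁ c₂) ∧ -(B2 hf h κ c₁ c₂) ≤ c₂ * ‖zV hf h‖ ^ 2 := by
  rcases hc.eq_or_lt with h0 | h0
  · have := B2_odd hf h κ c₁ 0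
    rw [← h0]
    simp at this
    have : B2 hf h κ c₁ 0 = 0 := by linarith
    simp [this]
  have e1 : xv hf h κ c₁ (-c₂) - xv hf h κ c₁ c₂ = (2 * c₂) • zV hf h := by
    rw [xv_eq, xv_eq, neg_smul, two_mul, add_smul]; abel
  have h1 := cone_firm Lp.posPart pp1 pp2 (xv hf h κ c₁ (-c₂)) (xv hf h κ c₁ c₂)
  have h2 := cone_lip Lp.posPart pp1 pp2 (xv hf h κ c₁ (-c₂)) (xv hf h κ c₁ c₂)
  rw [e1, inner_smul_left, inner_sub_right] at h1
  have h3 := B2_odd hf h κ c₁ c₂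
  unfold B2 at h3 ⊢
  rw [h3] at h1
  simp only [conj_trivial] at h1
  constructor
  · have : 0 ≤ 2 * c₂ * (2 * (-inner ℝ (zV hf h) (Lp.posPart (xv hf h κ c₁ c₂)))) := by
      have := sq_nonneg ‖Lp.posPart (xv hf h κ c₁ (-c₂)) - Lp.posPart (xv hf h κ c₁ c₂)‖
      linarith
    by_contra hlt
    push Not at hlt
    nlinarith
  · have h4 := real_inner_le_norm (zV hf h)
      (Lp.posPart (xv hf h κ c₁ (-c₂)) - Lp.posPart (xv hf h κ c₁ c₂))
    rw [inner_sub_right, h3] at h4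
    rw [e1, norm_smul, Real.norm_of_nonneg (by linarith)] at h2
    have h5 := norm_nonneg (zV hf h)
    have := mul_le_mul_of_nonneg_left h2 h5
    nlinarith

lemma d1F_eq {κ : ℝ} (hκ : 0 < κ) (c₁ c₂ : ℝ) :
    d1F f κ c₁ c₂ = -(B1 hf h κ c₁ c₂) / Fv hf h κ c₁ c₂ := by
  unfold d1F
  simp_rw [Fk_eq hf h]
  refine (hasDerivAt_of_subgrad _ (fun t => -(B1 hf h κ t c₂) / Fv hf h κ t c₂) ?_ ?_ c₁).deriv
  · refine Continuous.div ?_ ?_ fun t => (Fv_pos hf h hκ t c₂).ne'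
    · exact ((B1_cont hf h).comp (f := fun t : ℝ => (κ, t, c₂)) (by fun_prop)).neg
    · exact ((Fv_cont hf h).comp (f := fun t : ℝ => (κ, t, c₂)) (by fun_prop))
  · intro x y
    have := Fv_subgrad hf h hκ x c₂ y c₂
    simpa using this

lemma d2F_eq {κ : ℝ} (hκ : 0 < κ) (c₁ c₂ : ℝ) :
    d2F f κ c₁ c₂ = -(B2 hf h κ c₁ c₂) / Fv hf h κ c₁ c₂ := by
  unfold d2F
  simp_rw [Fk_eq hf h]
  refine (hasDerivAt_of_subgrad _ (fun t => -(B2 hf h κ c₁ t) / Fv hf h κ c₁ t) ?_ ?_ c₂).deriv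
  · refine Continuous.div ?_ ?_ fun t => (Fv_pos hf h hκ c₁ t).ne'
    · exact ((B2_cont hf h).comp (f := fun t : ℝ => (κ, c₁, t)) (by fun_prop)).neg
    · exact ((Fv_cont hf h).comp (f := fun t : ℝ => (κ, c₁, t)) (by fun_prop))
  · intro x y
    have := Fv_subgrad hf h hκ c₁ x c₁ y
    simpa using this

end

/-! ### Interface for `F` -/
section Interface
variable {f : ℝ → ℝ} (hf : Continuous f) (h : ∀ x, f x ∈ Icc (0:ℝ) 1)


lemma Fk_pos
    (hf : Continuous f) (h : ∀ x, f x ∈ Icc (0:ℝ) 1) {κ : ℝ} (hκ : 0 < κ) (c₁ c₂ : ℝ) : 0 < Fk f κ c₁ c₂ := by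
  rw [Fk_eq hf h]; exact Fv_pos hf h hκ c₁ c₂

lemma Fk_subgrad
    (hf : Continuous f) (h : ∀ x, f x ∈ Icc (0:ℝ) 1) {κ : ℝ} (hκ : 0 < κ) (c₁ c₂ c₁' c₂' : ℝ) :
    Fk f κ c₁ c₂ + d1F f κ c₁ c₂ * (c₁' - c₁) + d2F f κ c₁ c₂ * (c₂' - c₂) ≤ Fk f κ c₁' c₂' := by
  rw [Fk_eq hf h, Fk_eq hf h, d1F_eq hf h hκ, d2F_eq hf h hκ]
  exact Fv_subgrad hf h hκ _ _ _ _

lemma Fk_cont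
    (hf : Continuous f) (h : ∀ x, f x ∈ Icc (0:ℝ) 1) : Continuous (fun q : ℝ × ℝ × ℝ => Fk f q.1 q.2.1 q.2.2) := by
  simp_rw [Fk_eq hf h]; exact Fv_cont hf h

lemma d1F_cont
    (hf : Continuous f) (h : ∀ x, f x ∈ Icc (0:ℝ) 1) : ContinuousOn (fun q : ℝ × ℝ × ℝ => d1F f q.1 q.2.1 q.2.2) {q | 0 < q.1} := by
  have key : ContinuousOn (fun q : ℝ × ℝ × ℝ =>
      -(B1 hf h q.1 q.2.1 q.2.2) / Fv hf h q.1 q.2.1 q.2.2) {q | 0 < q.1} := by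
    refine ((B1_cont hf h).neg.continuousOn).div (Fv_cont hf h).continuousOn ?_
    intro q hq
    exact (Fv_pos hf h (κ := q.1) hq q.2.1 q.2.2).ne'
  refine key.congr ?_
  intro q hq
  have hq' : 0 < q.1 := hq
  simp only [d1F_eq hf h hq']

lemma d2F_cont
    (hf : Continuous f) (h : ∀ x, f x ∈ Icc (0:ℝ) 1) : ContinuousOn (fun q : ℝ × ℝ × ℝ => d2F f q.1 q.2.1 q.2.2) {q | 0 < q.1} := by
  have key : ContinuousOn (fun q : ℝ × ℝ × ℝ =>
      -(B2 hf h q.1 q.2.1 q.2.2) / Fv hf h q.1 q.2.1 q.2.2) {q | 0 < q.1} := by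
    refine ((B2_cont hf h).neg.continuousOn).div (Fv_cont hf h).continuousOn ?_
    intro q hq
    exact (Fv_pos hf h (κ := q.1) hq q.2.1 q.2.2).ne'
  refine key.congr ?_
  intro q hq
  have hq' : 0 < q.1 := hq
  simp only [d2F_eq hf h hq']

lemma d2F_zero
    (hf : Continuous f) (h : ∀ x, f x ∈ Icc (0:ℝ) 1) {κ : ℝ} (hκ : 0 < κ) (c₁ : ℝ) : d2F f κ c₁ 0 = 0 := by
  rw [d2F_eq hf h hκ]
  have := B2_odd hf h κ c₁ 0
  simp at this
  have : B2 hf h κ c₁ 0 = 0 := by linarith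
  simp [this]

lemma d2F_nonneg
    (hf : Continuous f) (h : ∀ x, f x ∈ Icc (0:ℝ) 1) {κ : ℝ} (hκ : 0 < κ) (c₁ c₂ : ℝ) (hc : 0 ≤ c₂) : 0 ≤ d2F f κ c₁ c₂ := by
  rw [d2F_eq hf h hκ]
  exact div_nonneg (B2_bounds hf h hc).1 (norm_nonneg _)

lemma d2F_le
    (hf : Continuous f) (h : ∀ x, f x ∈ Icc (0:ℝ) 1) : ∃ C : ℝ, 0 ≤ C ∧ ∀ κ c₁ c₂ : ℝ, 0 < κ → 0 ≤ c₂ →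
    d2F f κ c₁ c₂ ≤ c₂ * C / Fk f κ c₁ c₂ := by
  refine ⟨‖zV hf h‖ ^ 2, sq_nonneg _, fun κ c₁ c₂ hκ hc => ?_⟩
  rw [d2F_eq hf h hκ, Fk_eq hf h]
  have := Fv_pos hf h hκ c₁ c₂
  gcongr
  exact (B2_bounds hf h hc).2

lemma d1F_le
    (hf : Continuous f) (h : ∀ x, f x ∈ Icc (0:ℝ) 1) : ∃ C : ℝ, 0 ≤ C ∧ ∀ κ c₁ c₂ : ℝ, 0 < κ → |d1F f κ c₁ c₂| ≤ C := by
  refine ⟨‖tV hf h‖, norm_nonneg _, fun κ c₁ c₂ hκ => ?_⟩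
  have hp := Fv_pos hf h hκ c₁ c₂
  rw [d1F_eq hf h hκ, abs_div, abs_neg, abs_of_pos hp, div_le_iff₀ hp]
  exact abs_real_inner_le_norm _ _

lemma Fk_growth
    (hf : Continuous f) (h : ∀ x, f x ∈ Icc (0:ℝ) 1) : ∃ C : ℝ, ∀ κ c t : ℝ, 0 < κ → 0 ≤ t →
    Fk f κ (t * c) t ≤ κ * C + t * Fk f 0 c 1 := by
  refine ⟨‖eV hf h‖, fun κ c t hκ ht => ?_⟩
  have hhom : Fk f 0 (t * c) t = t * Fk f 0 c 1 := by
    unfold Fk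
    rw [← Real.sqrt_sq ht, ← Real.sqrt_mul (sq_nonneg t), Real.sqrt_sq ht, ← integral_const_mul]
    congr 2
    funext g
    rw [← integral_const_mul]
    congr 1
    funext z
    have e : ∀ x : ℝ, (max (t * x) 0) ^ 2 = t ^ 2 * (max x 0) ^ 2 := by
      intro x
      rw [← mul_pow, mul_max_of_nonneg _ _ ht, mul_zero]
    have e1 := e (0 - c * g - 1 * z)
    have e2 := e (0 + c * g - 1 * z)
    have a1 : t * (0 - c * g - 1 * z) = 0 - t * c * g - t * z := by ring
    have a2 : t * (0 + c * g - 1 * z) = 0 + t * c * g - t * z := by ring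
    rw [a1] at e1
    rw [a2] at e2
    rw [e1, e2]; ring
  rw [← hhom, Fk_eq hf h, Fk_eq hf h]
  have h1 := inner_xv hf h κ (t * c) t 0 (t * c) t
  have h2 := inner_xv_self hf h κ (t * c) t
  have h3 := real_inner_le_norm (eV hf h) (Lp.posPart (xv hf h κ (t * c) t))
  have hp := Fv_pos hf h hκ (t * c) t
  change _ ≤ _ * Fv hf h κ (t * c) t at h3
  have h4 : Fv hf h κ (t * c) t * Fv hf h κ (t * c) t
      ≤ (κ * ‖eV hf h‖ + Fv hf h 0 (t * c) t) * Fv hf h κ (t * c) t := by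
    have := mul_le_mul_of_nonneg_left h3 hκ.le
    nlinarith
  exact le_of_mul_le_mul_right h4 hp

end Interface

/-! ### The integrals appearing in the system -/

/-- weighted integrals -/
def KI (μ : Measure (ℝ × ℝ)) (V : ℝ × ℝ → ℝ) (i j : ℕ) (b σ : ℝ) : ℝ :=
  ∫ q, V q * (q.1 ^ i / (b * q.1 + σ) ^ j) ∂μ

/-- admissible pairs -/
def Adm : Set (ℝ × ℝ) := {p | 0 ≤ p.1 ∧ 0 ≤ p.2 ∧ 0 < p.1 + p.2}

lemma den_lower {xmin x b σ : ℝ} (hx : xmin ≤ x) (hb : 0 ≤ b) (hσ : 0 ≤ σ) :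
    min xmin 1 * (b + σ) ≤ b * x + σ := by
  have h1 : min xmin 1 ≤ xmin := min_le_left _ _
  have h2 : min xmin 1 ≤ 1 := min_le_right _ _
  nlinarith [mul_le_mul_of_nonneg_left (h1.trans hx) hb, mul_le_mul_of_nonneg_left h2 hσ]

lemma ratio_bound {xmin xmax x b σ δ : ℝ} (hxmin : 0 < xmin) (hx : x ∈ Icc xmin xmax)
    (hb : 0 ≤ b) (hσ : 0 ≤ σ) (hδ : 0 < δ) (hd : δ ≤ b + σ) (i j : ℕ) :
    ‖x ^ i / (b * x + σ) ^ j‖ ≤ xmax ^ i / (min xmin 1 * δ) ^ j := by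
  have hx0 : 0 < x := hxmin.trans_le hx.1
  have hm : 0 < min xmin 1 := lt_min hxmin one_pos
  have h1 : min xmin 1 * δ ≤ b * x + σ :=
    (mul_le_mul_of_nonneg_left hd hm.le).trans (den_lower hx.1 hb hσ)
  have h2 : 0 < min xmin 1 * δ := mul_pos hm hδ
  have h3 : 0 < b * x + σ := h2.trans_le h1
  rw [Real.norm_of_nonneg (by positivity)]
  have hxm := hx.2
  have hx1 : 0 ≤ xmax := hx0.le.trans hx.2
  gcongr

section
variable {μ : Measure (ℝ × ℝ)} {xmin xmax : ℝ} (hxmin : 0 < xmin)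
  (hsupp : ∀ᵐ q ∂μ, q.1 ∈ Set.Icc xmin xmax)

lemma KI_integrable
    (hxmin : 0 < xmin) (hsupp : ∀ᵐ q ∂μ, q.1 ∈ Set.Icc xmin xmax) {V : ℝ × ℝ → ℝ} (hV : Integrable V μ) (i j : ℕ) {b σ : ℝ}
    (h : (b, σ) ∈ Adm) : Integrable (fun q => V q * (q.1 ^ i / (b * q.1 + σ) ^ j)) μ := by
  obtain ⟨hb, hσ, hp⟩ := h
  refine hV.mul_bdd (c := xmax ^ i / (min xmin 1 * (b + σ)) ^ j) ?_ ?_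
  · exact Measurable.aestronglyMeasurable (by fun_prop)
  · filter_upwards [hsupp] with q hq
    exact ratio_bound hxmin hq hb hσ hp le_rfl i j

lemma KI_cont
    (hxmin : 0 < xmin) (hsupp : ∀ᵐ q ∂μ, q.1 ∈ Set.Icc xmin xmax) {V : ℝ × ℝ → ℝ} (hV : Integrable V μ) (i j : ℕ) :
    ContinuousOn (fun p : ℝ × ℝ => KI μ V i j p.1 p.2) Adm := by
  intro p hp
  obtain ⟨hb, hσ, hpp⟩ := hp
  unfold KI
  have hnear : ∀ᶠ p' : ℝ × ℝ in 𝓝[Adm] p, (p.1 + p.2) / 2 < p'.1 + p'.2 := by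
    refine nhdsWithin_le_nhds ?_
    have hc : Continuous (fun p' : ℝ × ℝ => p'.1 + p'.2) := by fun_prop
    exact hc.tendsto p (lt_mem_nhds (half_lt_self hpp))
  refine continuousWithinAt_of_dominated
    (bound := fun q => ‖V q‖ * (xmax ^ i / (min xmin 1 * ((p.1 + p.2) / 2)) ^ j)) ?_ ?_ ?_ ?_
  · refine Eventually.of_forall fun p' => ?_
    exact hV.1.mul (Measurable.aestronglyMeasurable (by fun_prop))
  · filter_upwards [hnear, self_mem_nhdsWithin] with p' h1 h2
    filter_upwards [hsupp] with q hq
    rw [norm_mul]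
    gcongr
    exact ratio_bound hxmin hq h2.1 h2.2.1 (by linarith) h1.le i j
  · exact hV.norm.mul_const _
  · filter_upwards [hsupp] with q hq
    apply ContinuousAt.continuousWithinAt
    have hm : 0 < min xmin 1 := lt_min hxmin one_pos
    have h3 : 0 < p.1 * q.1 + p.2 := (mul_pos hm hpp).trans_le (den_lower hq.1 hb hσ)
    have h4 : (p.1 * q.1 + p.2) ^ j ≠ 0 := by positivity
    have hc : Continuous (fun p : ℝ × ℝ => (p.1 * q.1 + p.2) ^ j) := by fun_prop
    exact continuousAt_const.mul (continuousAt_const.div hc.continuousAt h4)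

lemma den_pos
    (hxmin : 0 < xmin) (hsupp : ∀ᵐ q ∂μ, q.1 ∈ Set.Icc xmin xmax) {b σ : ℝ} (h : (b, σ) ∈ Adm) : ∀ᵐ q ∂μ, 0 < b * q.1 + σ ∧ 0 < q.1 := by
  filter_upwards [hsupp] with q hq
  have hm : 0 < min xmin 1 := lt_min hxmin one_pos
  exact ⟨(mul_pos hm h.2.2).trans_le (den_lower hq.1 h.1 h.2.1), hxmin.trans_le hq.1⟩

/-- `I2 ≥ I0²` -/
lemma KI_cs
    (hxmin : 0 < xmin) (hsupp : ∀ᵐ q ∂μ, q.1 ∈ Set.Icc xmin xmax) {V : ℝ × ℝ → ℝ} (hV : Integrable V μ) (hV0 : ∀ q, 0 ≤ V q) (hV1 : ∫ q, V q ∂μ = 1)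
    {b σ : ℝ} (h : (b, σ) ∈ Adm) : KI μ V 1 1 b σ ^ 2 ≤ KI μ V 2 2 b σ := by
  set r := KI μ V 1 1 b σ with hr
  have i1 := KI_integrable hxmin hsupp hV 1 1 h
  have i2 := KI_integrable hxmin hsupp hV 2 2 h
  have key : 0 ≤ ∫ q, V q * (q.1 ^ 1 / (b * q.1 + σ) ^ 1 - r) ^ 2 ∂μ :=
    integral_nonneg fun q => mul_nonneg (hV0 q) (sq_nonneg _)
  have e : (fun q : ℝ × ℝ => V q * (q.1 ^ 1 / (b * q.1 + σ) ^ 1 - r) ^ 2) = fun q =>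
      V q * (q.1 ^ 2 / (b * q.1 + σ) ^ 2) - 2 * r * (V q * (q.1 ^ 1 / (b * q.1 + σ) ^ 1))
        + r ^ 2 * V q := by
    funext q
    rw [← div_pow, ← div_pow]; ring
  have i4 : Integrable (fun q => V q * (q.1 ^ 2 / (b * q.1 + σ) ^ 2)
      - 2 * r * (V q * (q.1 ^ 1 / (b * q.1 + σ) ^ 1))) μ := i2.sub (i1.const_mul _)
  rw [e, integral_add i4 (hV.const_mul _), integral_sub i2 (i1.const_mul _),
    integral_const_mul, integral_const_mul, hV1] at key
  change 0 ≤ KI μ V 2 2 b σ - 2 * r * r + r ^ 2 * 1 at key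
  nlinarith

lemma KI_22_le
    (hxmin : 0 < xmin) (hsupp : ∀ᵐ q ∂μ, q.1 ∈ Set.Icc xmin xmax) {V : ℝ × ℝ → ℝ} (hV : Integrable V μ) (hV0 : ∀ q, 0 ≤ V q)
    {b σ : ℝ} (h : (b, σ) ∈ Adm) : KI μ V 2 2 b σ ≤ xmax * KI μ V 1 2 b σ := by
  unfold KI
  rw [← integral_const_mul]
  refine integral_mono_ae (KI_integrable hxmin hsupp hV 2 2 h)
    ((KI_integrable hxmin hsupp hV 1 2 h).const_mul _) ?_
  filter_upwards [hsupp, den_pos hxmin hsupp h] with q hq hd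
  have e : xmax * (V q * (q.1 ^ 1 / (b * q.1 + σ) ^ 2)) = V q * (xmax * q.1 / (b * q.1 + σ) ^ 2) := by
    ring
  rw [e]
  have := hV0 q
  have h1 := hd.1
  have h2 : q.1 ^ 2 ≤ xmax * q.1 := by nlinarith [hq.2, hd.2]
  gcongr

lemma KI_12_le
    (hxmin : 0 < xmin) (hsupp : ∀ᵐ q ∂μ, q.1 ∈ Set.Icc xmin xmax) {V : ℝ × ℝ → ℝ} (hV : Integrable V μ) (hV0 : ∀ q, 0 ≤ V q) (hV1 : ∫ q, V q ∂μ = 1)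
    {b σ : ℝ} (h : (b, σ) ∈ Adm) (hσ : 0 < σ) : KI μ V 1 2 b σ ≤ xmax / σ ^ 2 := by
  unfold KI
  have : ∫ q, V q * (xmax / σ ^ 2) ∂μ = xmax / σ ^ 2 := by rw [integral_mul_const, hV1, one_mul]
  rw [← this]
  refine integral_mono_ae (KI_integrable hxmin hsupp hV 1 2 h) (hV.mul_const _) ?_
  filter_upwards [hsupp, den_pos hxmin hsupp h] with q hq hd
  have := hV0 q
  have h1 := hd.1
  have h3 : σ ≤ b * q.1 + σ := by nlinarith [h.1, hd.2]
  have h4 : q.1 ^ 1 ≤ xmax := by simpa using hq.2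
  have h5 : 0 ≤ xmax := by linarith [hq.2, hd.2]
  gcongr

lemma KI_lower
    (hxmin : 0 < xmin) (hsupp : ∀ᵐ q ∂μ, q.1 ∈ Set.Icc xmin xmax) {V : ℝ × ℝ → ℝ} (hV : Integrable V μ) (hV0 : ∀ q, 0 ≤ V q) (hV1 : ∫ q, V q ∂μ = 1)
    {b σ : ℝ} (h : (b, σ) ∈ Adm) (i : ℕ) : xmin ^ i / (b * xmax + σ) ^ 2 ≤ KI μ V i 2 b σ := by
  unfold KI
  have : ∫ q, V q * (xmin ^ i / (b * xmax + σ) ^ 2) ∂μ = xmin ^ i / (b * xmax + σ) ^ 2 := by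
    rw [integral_mul_const, hV1, one_mul]
  rw [← this]
  refine integral_mono_ae (hV.mul_const _) (KI_integrable hxmin hsupp hV i 2 h) ?_
  filter_upwards [hsupp, den_pos hxmin hsupp h] with q hq hd
  have := hV0 q
  have h1 := hd.1
  have h3 : b * q.1 + σ ≤ b * xmax + σ := by nlinarith [h.1, hq.2]
  have h4 := hq.1
  have h5 := hd.2
  gcongr

lemma KI_nonneg
    (hxmin : 0 < xmin) (hsupp : ∀ᵐ q ∂μ, q.1 ∈ Set.Icc xmin xmax) {V : ℝ × ℝ → ℝ} (hV0 : ∀ q, 0 ≤ V q)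
    {b σ : ℝ} (h : (b, σ) ∈ Adm) (i j : ℕ) : 0 ≤ KI μ V i j b σ := by
  unfold KI
  refine integral_nonneg_of_ae ?_
  filter_upwards [den_pos hxmin hsupp h] with q hd
  have h1 := hd.1
  have h2 := hd.2
  have := hV0 q
  show 0 ≤ _
  positivity

lemma KI_sigma_zero
    (hxmin : 0 < xmin) (hsupp : ∀ᵐ q ∂μ, q.1 ∈ Set.Icc xmin xmax) {V : ℝ × ℝ → ℝ} (hV1 : ∫ q, V q ∂μ = 1)
    {b : ℝ} (i : ℕ) : KI μ V i i b 0 = (b ^ i)⁻¹ := by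
  unfold KI
  have : ∫ q, V q * (b ^ i)⁻¹ ∂μ = (b ^ i)⁻¹ := by rw [integral_mul_const, hV1, one_mul]
  rw [← this]
  refine integral_congr_ae ?_
  filter_upwards [hsupp] with q hq
  have : 0 < q.1 := hxmin.trans_le hq.1
  simp only [add_zero, mul_pow]
  congr 1
  have h2 : q.1 ^ i ≠ 0 := by positivity
  rw [div_mul_eq_div_div_swap, div_self h2, one_div]

end

/-- square weight -/
def W2 (q : ℝ × ℝ) : ℝ := q.2 ^ 2
/-- unit weight -/
def V1 (_ : ℝ × ℝ) : ℝ := 1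

/-- The reduced system. -/
def Red (μ : Measure (ℝ × ℝ)) (ψ c₁ c₂ A b σ : ℝ) : Prop :=
  -c₁ = A * KI μ W2 1 1 b σ ∧ c₁ ^ 2 + c₂ ^ 2 = ψ * KI μ V1 2 2 b σ + A ^ 2 * KI μ W2 2 2 b σ

/-- The reduced norm equation. -/
def Red3 (μ : Measure (ℝ × ℝ)) (ψ A b σ : ℝ) : Prop :=
  1 = ψ * KI μ V1 1 2 b σ + A ^ 2 * KI μ W2 1 2 b σ

/-- `A` -/
def AA (f : ℝ → ℝ) (κ c₁ c₂ : ℝ) : ℝ := d1F f κ c₁ c₂ - c₁ * c₂⁻¹ * d2F f κ c₁ c₂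
/-- `b` -/
def bb (f : ℝ → ℝ) (κ c₁ c₂ : ℝ) : ℝ := c₂⁻¹ * d2F f κ c₁ c₂

lemma sol_iff (f : ℝ → ℝ) (μ : Measure (ℝ × ℝ)) [IsProbabilityMeasure μ]
    {xmin xmax : ℝ} (hxmin : 0 < xmin)
    (hsupp : ∀ᵐ q ∂μ, q.1 ∈ Set.Icc xmin xmax) (hW : Integrable W2 μ) (ψ κ c₁ c₂ s : ℝ)
    (hadm : (bb f κ c₁ c₂, Real.sqrt ψ * s) ∈ Adm) :
    SolSysMu f μ ψ κ c₁ c₂ s ↔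
      Red μ ψ c₁ c₂ (AA f κ c₁ c₂) (bb f κ c₁ c₂) (Real.sqrt ψ * s) ∧
      Red3 μ ψ (AA f κ c₁ c₂) (bb f κ c₁ c₂) (Real.sqrt ψ * s) := by
  unfold SolSysMu Red Red3
  rw [and_assoc]
  change (_ = ∫ q : ℝ × ℝ, AA f κ c₁ c₂ * q.2 ^ 2 * Real.sqrt q.1
      / (bb f κ c₁ c₂ * Real.sqrt q.1 + Real.sqrt ψ * s * (Real.sqrt q.1)⁻¹) ∂μ) ∧
    (_ = ∫ q : ℝ × ℝ, (ψ * q.1 + (AA f κ c₁ c₂) ^ 2 * q.2 ^ 2 * q.1)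
      / (bb f κ c₁ c₂ * Real.sqrt q.1 + Real.sqrt ψ * s * (Real.sqrt q.1)⁻¹) ^ 2 ∂μ) ∧
    (_ = ∫ q : ℝ × ℝ, (ψ + (AA f κ c₁ c₂) ^ 2 * q.2 ^ 2)
      / (bb f κ c₁ c₂ * Real.sqrt q.1 + Real.sqrt ψ * s * (Real.sqrt q.1)⁻¹) ^ 2 ∂μ) ↔ _
  generalize hA : AA f κ c₁ c₂ = A
  generalize hb : bb f κ c₁ c₂ = b at *
  generalize hs : Real.sqrt ψ * s = σ at *
  have hV : Integrable V1 μ := by unfold V1; exact integrable_const _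
  have hD : ∀ᵐ q ∂μ, b * Real.sqrt q.1 + σ * (Real.sqrt q.1)⁻¹ = (b * q.1 + σ) / Real.sqrt q.1
      ∧ 0 < b * q.1 + σ ∧ 0 < Real.sqrt q.1 ∧ Real.sqrt q.1 ^ 2 = q.1 := by
    filter_upwards [den_pos hxmin hsupp hadm] with q hd
    have h1 := Real.sqrt_pos.mpr hd.2
    have h2 := Real.sq_sqrt hd.2.le
    refine ⟨?_, hd.1, h1, h2⟩
    field_simp
    rw [h2]
  have e1 : ∫ q : ℝ × ℝ, A * q.2 ^ 2 * Real.sqrt q.1 / (b * Real.sqrt q.1 + σ * (Real.sqrt q.1)⁻¹) ∂μ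
      = A * KI μ W2 1 1 b σ := by
    unfold KI
    rw [← integral_const_mul]
    refine integral_congr_ae ?_
    filter_upwards [hD] with q ⟨h1, h2, h3, h4⟩
    rw [h1, W2]
    have h5 : q.1 ^ 1 / (b * q.1 + σ) ^ 1 = Real.sqrt q.1 * Real.sqrt q.1 / (b * q.1 + σ) := by
      rw [← sq, h4, pow_one, pow_one]
    rw [h5]
    field_simp
  have e2 : ∫ q : ℝ × ℝ, (ψ * q.1 + A ^ 2 * q.2 ^ 2 * q.1)
      / (b * Real.sqrt q.1 + σ * (Real.sqrt q.1)⁻¹) ^ 2 ∂μ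
      = ψ * KI μ V1 2 2 b σ + A ^ 2 * KI μ W2 2 2 b σ := by
    unfold KI
    rw [← integral_const_mul, ← integral_const_mul, ← integral_add
      ((KI_integrable hxmin hsupp hV 2 2 hadm).const_mul _)
      ((KI_integrable hxmin hsupp hW 2 2 hadm).const_mul _)]
    refine integral_congr_ae ?_
    filter_upwards [hD] with q ⟨h1, h2, h3, h4⟩
    rw [h1, W2, V1, div_pow, h4]
    have : q.1 ≠ 0 := by rw [← h4]; positivity
    field_simp
  have e3 : ∫ q : ℝ × ℝ, (ψ + A ^ 2 * q.2 ^ 2)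
      / (b * Real.sqrt q.1 + σ * (Real.sqrt q.1)⁻¹) ^ 2 ∂μ
      = ψ * KI μ V1 1 2 b σ + A ^ 2 * KI μ W2 1 2 b σ := by
    unfold KI
    rw [← integral_const_mul, ← integral_const_mul, ← integral_add
      ((KI_integrable hxmin hsupp hV 1 2 hadm).const_mul _)
      ((KI_integrable hxmin hsupp hW 1 2 hadm).const_mul _)]
    refine integral_congr_ae ?_
    filter_upwards [hD] with q ⟨h1, h2, h3, h4⟩
    rw [h1, W2, V1, div_pow, h4]
    have : q.1 ≠ 0 := by rw [← h4]; positivity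
    field_simp
  rw [e1, e2, e3]

/-- multiplication by the square root of the first coordinate is bounded -/
lemma exists_mulOp (μ : Measure (ℝ × ℝ)) {xmin xmax : ℝ} 
    (hsupp : ∀ᵐ q ∂μ, q.1 ∈ Set.Icc xmin xmax) :
    ∃ M : Lp ℝ 2 μ →L[ℝ] Lp ℝ 2 μ, ∀ p, (M p : ℝ × ℝ → ℝ) =ᵐ[μ] fun q => Real.sqrt q.1 * p q := by
  have hbd : ∀ p : ℝ × ℝ → ℝ, ∀ᵐ q ∂μ, ‖Real.sqrt q.1 * p q‖ ≤ Real.sqrt xmax * ‖p q‖ := by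
    intro p
    filter_upwards [hsupp] with q hq
    rw [norm_mul, Real.norm_of_nonneg (Real.sqrt_nonneg _)]
    gcongr
    exact hq.2
  have hmem : ∀ p : Lp ℝ 2 μ, MemLp (fun q : ℝ × ℝ => Real.sqrt q.1 * p q) 2 μ := by
    intro p
    refine MemLp.of_le_mul (Lp.memLp p) ?_ (hbd p)
    exact (Measurable.aestronglyMeasurable (by fun_prop)).mul (Lp.aestronglyMeasurable p)
  let L : Lp ℝ 2 μ →ₗ[ℝ] Lp ℝ 2 μ :=
    { toFun := fun p => (hmem p).toLp _
      map_add' := by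
        intro p p'
        apply Lp.ext
        filter_upwards [(hmem (p + p')).coeFn_toLp, (hmem p).coeFn_toLp, (hmem p').coeFn_toLp,
          Lp.coeFn_add p p', Lp.coeFn_add ((hmem p).toLp _) ((hmem p').toLp _)] with q h1 h2 h3 h4 h5
        rw [h1, h5, Pi.add_apply, h2, h3, h4, Pi.add_apply, mul_add]
      map_smul' := by
        intro c p
        apply Lp.ext
        filter_upwards [(hmem (c • p)).coeFn_toLp, (hmem p).coeFn_toLp,
          Lp.coeFn_smul c p, Lp.coeFn_smul c ((hmem p).toLp _)] with q h1 h2 h4 h5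
        rw [h1, RingHom.id_apply, h5, Pi.smul_apply, h2, h4, Pi.smul_apply, smul_eq_mul, smul_eq_mul]
        ring }
  refine ⟨L.mkContinuous (Real.sqrt xmax) ?_, ?_⟩
  · intro p
    refine Lp.norm_le_mul_norm_of_ae_le_mul ?_
    filter_upwards [(hmem p).coeFn_toLp, hbd p] with q h1 h2
    show ‖((hmem p).toLp _ : Lp ℝ 2 μ) q‖ ≤ _
    rw [h1]; exact h2
  · intro p
    exact (hmem p).coeFn_toLp

/-- The Hilbert space -/
abbrev HH (μ : Measure (ℝ × ℝ)) := WithLp 2 (Lp ℝ 2 μ × Lp ℝ 2 μ)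

/-- The doubled operator -/
def SS {μ : Measure (ℝ × ℝ)} (M : Lp ℝ 2 μ →L[ℝ] Lp ℝ 2 μ) : HH μ →L[ℝ] HH μ :=
  ((WithLp.prodContinuousLinearEquiv 2 ℝ (Lp ℝ 2 μ) (Lp ℝ 2 μ)).symm : _ →L[ℝ] HH μ).comp
    ((M.prodMap M).comp
      ((WithLp.prodContinuousLinearEquiv 2 ℝ (Lp ℝ 2 μ) (Lp ℝ 2 μ)) : HH μ →L[ℝ] _))

lemma SS_fst {μ : Measure (ℝ × ℝ)} (M : Lp ℝ 2 μ →L[ℝ] Lp ℝ 2 μ) (h : HH μ) :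
    (SS M h).fst = M h.fst := rfl
lemma SS_snd {μ : Measure (ℝ × ℝ)} (M : Lp ℝ 2 μ →L[ℝ] Lp ℝ 2 μ) (h : HH μ) :
    (SS M h).snd = M h.snd := rfl

lemma HH_inner {μ : Measure (ℝ × ℝ)} (h k : HH μ) :
    inner ℝ h k = ∫ q, h.fst q * k.fst q ∂μ + ∫ q, h.snd q * k.snd q ∂μ := by
  rw [WithLp.prod_inner_apply, L2.inner_def, L2.inner_def]
  congr 1 <;> (congr 1; funext q; simp [mul_comm])

lemma SS_symm {μ : Measure (ℝ × ℝ)} (M : Lp ℝ 2 μ →L[ℝ] Lp ℝ 2 μ)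
    (hM : ∀ p, (M p : ℝ × ℝ → ℝ) =ᵐ[μ] fun q => Real.sqrt q.1 * p q) (h k : HH μ) :
    inner ℝ (SS M h) k = inner ℝ h (SS M k) := by
  rw [HH_inner, HH_inner, SS_fst, SS_fst, SS_snd, SS_snd]
  congr 1 <;> apply integral_congr_ae
  · filter_upwards [hM h.fst, hM k.fst] with q h1 h2
    rw [h1, h2]; ring
  · filter_upwards [hM h.snd, hM k.snd] with q h1 h2
    rw [h1, h2]; ring

/-- Hilbert-space data attached to `μ`. -/
structure Setup (μ : Measure (ℝ × ℝ)) (M : Lp ℝ 2 μ →L[ℝ] Lp ℝ 2 μ) (w g : HH μ) : Prop where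
  hM : ∀ p, (M p : ℝ × ℝ → ℝ) =ᵐ[μ] fun q => Real.sqrt q.1 * p q
  w1 : (w.fst : ℝ × ℝ → ℝ) =ᵐ[μ] fun _ => 0
  w2 : (w.snd : ℝ × ℝ → ℝ) =ᵐ[μ] fun q => q.2
  g1 : (g.fst : ℝ × ℝ → ℝ) =ᵐ[μ] fun _ => 1
  g2 : (g.snd : ℝ × ℝ → ℝ) =ᵐ[μ] fun _ => 0
  hw : ‖w‖ = 1

lemma exists_setup (μ : Measure (ℝ × ℝ)) [IsProbabilityMeasure μ] {xmin xmax : ℝ}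
    (hsupp : ∀ᵐ q ∂μ, q.1 ∈ Set.Icc xmin xmax)
    (hW : Integrable W2 μ) (hw2 : ∫ q, W2 q ∂μ = 1) : ∃ M w g, Setup μ M w g := by
  obtain ⟨M, hM⟩ := exists_mulOp μ hsupp
  have m0 : MemLp (fun _ : ℝ × ℝ => (0:ℝ)) 2 μ := memLp_const 0
  have m1 : MemLp (fun _ : ℝ × ℝ => (1:ℝ)) 2 μ := memLp_const 1
  have mW : MemLp (fun q : ℝ × ℝ => q.2) 2 μ :=
    (memLp_two_iff_integrable_sq (Measurable.aestronglyMeasurable (by fun_prop))).mpr hW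
  refine ⟨M, WithLp.toLp 2 (m0.toLp _, mW.toLp _), WithLp.toLp 2 (m1.toLp _, m0.toLp _), hM,
    m0.coeFn_toLp, mW.coeFn_toLp, m1.coeFn_toLp, m0.coeFn_toLp, ?_⟩
  have : ‖(WithLp.toLp 2 (m0.toLp _, mW.toLp _) : HH μ)‖ ^ 2 = 1 := by
    rw [← real_inner_self_eq_norm_sq, HH_inner, ← hw2]
    have e1 : ∫ q, (m0.toLp _ : Lp ℝ 2 μ) q * (m0.toLp _ : Lp ℝ 2 μ) q ∂μ = 0 := by
      refine integral_eq_zero_of_ae ?_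
      filter_upwards [m0.coeFn_toLp] with q h
      rw [h]; simp
    have e2 : ∫ q, (mW.toLp _ : Lp ℝ 2 μ) q * (mW.toLp _ : Lp ℝ 2 μ) q ∂μ = ∫ q, W2 q ∂μ := by
      apply integral_congr_ae
      filter_upwards [mW.coeFn_toLp] with q h
      rw [h, W2, sq]
    change ∫ q, (m0.toLp _ : Lp ℝ 2 μ) q * (m0.toLp _ : Lp ℝ 2 μ) q ∂μ + 
      ∫ q, (mW.toLp _ : Lp ℝ 2 μ) q * (mW.toLp _ : Lp ℝ 2 μ) q ∂μ = _
    rw [e1, e2, zero_add]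
  nlinarith [norm_nonneg (WithLp.toLp 2 (m0.toLp _, mW.toLp _) : HH μ)]

section
variable {μ : Measure (ℝ × ℝ)} {M : Lp ℝ 2 μ →L[ℝ] Lp ℝ 2 μ} {w g : HH μ}

lemma NN_ae (st : Setup μ M w g) (F1 F2 : ℝ → ℝ → ℝ) (r : ℝ) (h : HH μ) {c1 c2 : ℝ}
    (hc1 : C1 (SS M) w h = c1) (hc2 : C2 (SS M) w h = c2) :
    ∀ᵐ q ∂μ, (NN F1 F2 (SS M) w g r h).fst q
        = Real.sqrt q.1 * ((c2⁻¹ * F2 c1 c2) * (Real.sqrt q.1 * h.fst q) + r)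
      ∧ (NN F1 F2 (SS M) w g r h).snd q
        = Real.sqrt q.1 * ((F1 c1 c2 - c1 * c2⁻¹ * F2 c1 c2) * q.2
            + (c2⁻¹ * F2 c1 c2) * (Real.sqrt q.1 * h.snd q)) := by
  unfold NN Pi1
  rw [hc1, hc2]
  set b := c2⁻¹ * F2 c1 c2 with hb
  have hA : F1 c1 c2 - c1 * c2⁻¹ * F2 c1 c2 = F1 c1 c2 - c1 * b := by rw [hb]; ring
  rw [hA]
  set F := F1 c1 c2
  set v : HH μ := F • w + b • (SS M h - c1 • w) + r • g with hv
  have v1 : v.fst = F • w.fst + b • (M h.fst - c1 • w.fst) + r • g.fst := rfl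
  have v2 : v.snd = F • w.snd + b • (M h.snd - c1 • w.snd) + r • g.snd := rfl
  rw [SS_fst, SS_snd]
  filter_upwards [st.hM v.fst, st.hM v.snd, st.hM h.fst, st.hM h.snd, st.w1, st.w2, st.g1, st.g2,
    Lp.coeFn_add (F • w.fst + b • (M h.fst - c1 • w.fst)) (r • g.fst),
    Lp.coeFn_add (F • w.snd + b • (M h.snd - c1 • w.snd)) (r • g.snd),
    Lp.coeFn_add (F • w.fst) (b • (M h.fst - c1 • w.fst)),
    Lp.coeFn_add (F • w.snd) (b • (M h.snd - c1 • w.snd)),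
    Lp.coeFn_smul F w.fst, Lp.coeFn_smul F w.snd,
    Lp.coeFn_smul b (M h.fst - c1 • w.fst), Lp.coeFn_smul b (M h.snd - c1 • w.snd),
    Lp.coeFn_sub (M h.fst) (c1 • w.fst), Lp.coeFn_sub (M h.snd) (c1 • w.snd),
    Lp.coeFn_smul c1 w.fst, Lp.coeFn_smul c1 w.snd,
    Lp.coeFn_smul r g.fst, Lp.coeFn_smul r g.snd] with
    q a1 a2 a3 a4 a5 a6 a7 a8 a9 a10 a11 a12 a13 a14 a15 a16 a17 a18 a19 a20 a21 a22
  rw [a1, a2, v1, v2]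
  simp only [a9, a10, a11, a12, a13, a14, a15, a16, a17, a18, a19, a20, a21, a22, a3, a4, a5, a6,
    a7, a8, Pi.add_apply, Pi.sub_apply, Pi.smul_apply, smul_eq_mul]
  constructor <;> ring

lemma NN_iff (st : Setup μ M w g) {xmin xmax : ℝ} (hxmin : 0 < xmin)
    (hsupp : ∀ᵐ q ∂μ, q.1 ∈ Set.Icc xmin xmax)
    (F1 F2 : ℝ → ℝ → ℝ) (r σ : ℝ) (h : HH μ) {c1 c2 : ℝ}
    (hc1 : C1 (SS M) w h = c1) (hc2 : C2 (SS M) w h = c2) :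
    NN F1 F2 (SS M) w g r h = -(σ • h) ↔
    ∀ᵐ q ∂μ, (c2⁻¹ * F2 c1 c2 * q.1 + σ) * h.fst q = -(r * Real.sqrt q.1) ∧
      (c2⁻¹ * F2 c1 c2 * q.1 + σ) * h.snd q
        = -((F1 c1 c2 - c1 * c2⁻¹ * F2 c1 c2) * Real.sqrt q.1 * q.2) := by
  have key := NN_ae st F1 F2 r h hc1 hc2
  have s1 : (-(σ • h)).fst = -(σ • h.fst) := rfl
  have s2 : (-(σ • h)).snd = -(σ • h.snd) := rfl
  have hs : ∀ᵐ q ∂μ, (-(σ • h)).fst q = -(σ * h.fst q) ∧ (-(σ • h)).snd q = -(σ * h.snd q) := by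
    rw [s1, s2]
    filter_upwards [Lp.coeFn_neg (σ • h.fst), Lp.coeFn_neg (σ • h.snd), Lp.coeFn_smul σ h.fst,
      Lp.coeFn_smul σ h.snd] with q a1 a2 a3 a4
    rw [a1, a2, Pi.neg_apply, Pi.neg_apply, a3, a4]
    exact ⟨rfl, rfl⟩
  have hx : ∀ᵐ q ∂μ, Real.sqrt q.1 * Real.sqrt q.1 = q.1 := by
    filter_upwards [hsupp] with q hq
    exact Real.mul_self_sqrt (hxmin.le.trans hq.1)
  constructor
  · intro e
    rw [e] at key
    filter_upwards [key, hs, hx] with q a b c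
    rw [b.1, b.2] at a
    obtain ⟨a1, a2⟩ := a
    constructor
    · linear_combination (c2⁻¹ * F2 c1 c2) * h.fst q * (-c) - a1
    · linear_combination (c2⁻¹ * F2 c1 c2) * h.snd q * (-c) - a2
  · intro e
    apply WithLp.ofLp_injective
    refine Prod.ext ?_ ?_
    · apply Lp.ext
      filter_upwards [key, hs, hx, e] with q a b c d
      refine a.1.trans (Eq.trans ?_ b.1.symm)
      linear_combination (c2⁻¹ * F2 c1 c2) * h.fst q * c + d.1
    · apply Lp.ext
      filter_upwards [key, hs, hx, e] with q a b c d
      refine a.2.trans (Eq.trans ?_ b.2.symm)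
      linear_combination (c2⁻¹ * F2 c1 c2) * h.snd q * c + d.2

lemma C_pyth (st : Setup μ M w g) (h : HH μ) :
    C1 (SS M) w h ^ 2 + C2 (SS M) w h ^ 2 = ‖SS M h‖ ^ 2 := by
  unfold C2 Pi1
  rw [norm_sub_sq_real, norm_smul, inner_smul_right, st.hw]
  change C1 (SS M) w h ^ 2 + (_ - 2 * (_ * C1 (SS M) w h) + _) = _
  rw [Real.norm_eq_abs, mul_one, sq_abs]
  ring

/-- integrals attached to an explicit vector -/
lemma Hilb_vals [IsProbabilityMeasure μ] (st : Setup μ M w g) {xmin xmax : ℝ} (hxmin : 0 < xmin)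
    (hsupp : ∀ᵐ q ∂μ, q.1 ∈ Set.Icc xmin xmax) (hW : Integrable W2 μ)
    (r A b σ : ℝ) (hadm : (b, σ) ∈ Adm) (h : HH μ)
    (hh : ∀ᵐ q ∂μ, (b * q.1 + σ) * h.fst q = -(r * Real.sqrt q.1) ∧
      (b * q.1 + σ) * h.snd q = -(A * Real.sqrt q.1 * q.2)) :
    C1 (SS M) w h = -(A * KI μ W2 1 1 b σ) ∧
    C1 (SS M) w h ^ 2 + C2 (SS M) w h ^ 2 = r ^ 2 * KI μ V1 2 2 b σ + A ^ 2 * KI μ W2 2 2 b σ ∧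
    ‖h‖ ^ 2 = r ^ 2 * KI μ V1 1 2 b σ + A ^ 2 * KI μ W2 1 2 b σ := by
  have hV : Integrable V1 μ := by unfold V1; exact integrable_const _
  have hv : ∀ᵐ q ∂μ, h.fst q = -(r * Real.sqrt q.1) / (b * q.1 + σ) ∧
      h.snd q = -(A * Real.sqrt q.1 * q.2) / (b * q.1 + σ) ∧ 0 < b * q.1 + σ ∧
      Real.sqrt q.1 ^ 2 = q.1 := by
    filter_upwards [hh, den_pos hxmin hsupp hadm] with q a d
    have hd := d.1.ne'
    refine ⟨?_, ?_, d.1, Real.sq_sqrt d.2.le⟩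
    · rw [eq_div_iff hd, ← a.1, mul_comm]
    · rw [eq_div_iff hd, ← a.2, mul_comm]
  refine ⟨?_, ?_, ?_⟩
  · unfold C1 KI
    rw [HH_inner, SS_fst, SS_snd, ← integral_const_mul, ← integral_neg]
    have e1 : ∫ q, (M h.fst) q * w.fst q ∂μ = 0 := by
      rw [← integral_zero (ℝ × ℝ) ℝ (μ := μ)]
      apply integral_congr_ae
      filter_upwards [st.w1] with q a
      rw [a]; simp
    rw [e1, zero_add]
    apply integral_congr_ae
    filter_upwards [st.w2, st.hM h.snd, hv] with q a1 a2 a3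
    rw [a1, a2, a3.2.1, W2]
    have hd := a3.2.2.1.ne'
    have h4 := a3.2.2.2
    have h5 : q.1 ^ 1 / (b * q.1 + σ) ^ 1 = Real.sqrt q.1 ^ 2 / (b * q.1 + σ) := by
      rw [h4, pow_one, pow_one]
    rw [h5]
    ring
  · rw [C_pyth st, ← real_inner_self_eq_norm_sq, HH_inner, SS_fst, SS_snd]
    unfold KI
    rw [← integral_const_mul, ← integral_const_mul]
    congr 1
    · apply integral_congr_ae
      filter_upwards [st.hM h.fst, hv] with q a2 a3
      rw [a2, a3.1, V1]
      have h5 : q.1 ^ 2 / (b * q.1 + σ) ^ 2 = (Real.sqrt q.1 ^ 2) ^ 2 / (b * q.1 + σ) ^ 2 := by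
        rw [a3.2.2.2]
      rw [h5]
      generalize b * q.1 + σ = D
      ring
    · apply integral_congr_ae
      filter_upwards [st.hM h.snd, hv] with q a2 a3
      rw [a2, a3.2.1, W2]
      have h5 : q.1 ^ 2 / (b * q.1 + σ) ^ 2 = (Real.sqrt q.1 ^ 2) ^ 2 / (b * q.1 + σ) ^ 2 := by
        rw [a3.2.2.2]
      rw [h5]
      generalize b * q.1 + σ = D
      ring
  · rw [← real_inner_self_eq_norm_sq, HH_inner]
    unfold KI
    rw [← integral_const_mul, ← integral_const_mul]
    congr 1
    · apply integral_congr_ae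
      filter_upwards [hv] with q a3
      rw [a3.1, V1]
      have h5 : q.1 ^ 1 / (b * q.1 + σ) ^ 2 = Real.sqrt q.1 ^ 2 / (b * q.1 + σ) ^ 2 := by
        rw [a3.2.2.2, pow_one]
      rw [h5]
      generalize b * q.1 + σ = D
      ring
    · apply integral_congr_ae
      filter_upwards [hv] with q a3
      rw [a3.2.1, W2]
      have h5 : q.1 ^ 1 / (b * q.1 + σ) ^ 2 = Real.sqrt q.1 ^ 2 / (b * q.1 + σ) ^ 2 := by
        rw [a3.2.2.2, pow_one]
      rw [h5]
      generalize b * q.1 + σ = D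
      ring

/-- explicit vector -/
lemma exists_vec [IsProbabilityMeasure μ] {xmin xmax : ℝ} (hxmin : 0 < xmin)
    (hsupp : ∀ᵐ q ∂μ, q.1 ∈ Set.Icc xmin xmax) (hW : Integrable W2 μ)
    (r A b σ : ℝ) (hadm : (b, σ) ∈ Adm) : ∃ h : HH μ,
    ∀ᵐ q ∂μ, (b * q.1 + σ) * h.fst q = -(r * Real.sqrt q.1) ∧
      (b * q.1 + σ) * h.snd q = -(A * Real.sqrt q.1 * q.2) := by
  have hV : Integrable V1 μ := by unfold V1; exact integrable_const _
  have m1 : MemLp (fun q : ℝ × ℝ => -(r * Real.sqrt q.1) / (b * q.1 + σ)) 2 μ := by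
    rw [memLp_two_iff_integrable_sq (Measurable.aestronglyMeasurable (by fun_prop))]
    refine ((KI_integrable hxmin hsupp hV 1 2 hadm).const_mul (r ^ 2)).congr ?_
    filter_upwards [den_pos hxmin hsupp hadm] with q d
    rw [V1, div_pow, neg_sq, mul_pow, Real.sq_sqrt d.2.le]
    ring
  have m2 : MemLp (fun q : ℝ × ℝ => -(A * Real.sqrt q.1 * q.2) / (b * q.1 + σ)) 2 μ := by
    rw [memLp_two_iff_integrable_sq (Measurable.aestronglyMeasurable (by fun_prop))]
    refine ((KI_integrable hxmin hsupp hW 1 2 hadm).const_mul (A ^ 2)).congr ?_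
    filter_upwards [den_pos hxmin hsupp hadm] with q d
    rw [W2, div_pow, neg_sq, mul_pow, mul_pow, Real.sq_sqrt d.2.le]
    ring
  refine ⟨WithLp.toLp 2 (m1.toLp _, m2.toLp _), ?_⟩
  filter_upwards [den_pos hxmin hsupp hadm, m1.coeFn_toLp, m2.coeFn_toLp] with q d a1 a2
  have hd := d.1.ne'
  constructor
  · change (b * q.1 + σ) * (m1.toLp _ : Lp ℝ 2 μ) q = _
    rw [a1]; field_simp
  · change (b * q.1 + σ) * (m2.toLp _ : Lp ℝ 2 μ) q = _
    rw [a2]; field_simp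

end

lemma psiStar0_nonneg (f : ℝ → ℝ) : 0 ≤ psiStar0 f := Real.iInf_nonneg fun _ => sq_nonneg _

lemma bb_nonneg {f : ℝ → ℝ} (hf : Continuous f) (h01 : ∀ x, f x ∈ Set.Icc (0:ℝ) 1) {κ c₁ c₂ : ℝ}
    (hκ : 0 < κ) (hc : 0 ≤ c₂) : 0 ≤ bb f κ c₁ c₂ :=
  mul_nonneg (inv_nonneg.mpr hc) (d2F_nonneg hf h01 hκ c₁ c₂ hc)

/-- the multiplier cannot vanish -/
lemma nosol {f : ℝ → ℝ} (hf : Continuous f) (h01 : ∀ x, f x ∈ Set.Icc (0:ℝ) 1)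
    {μ : Measure (ℝ × ℝ)} [IsProbabilityMeasure μ] {xmin xmax : ℝ} (hxmin : 0 < xmin)
    (hsupp : ∀ᵐ q ∂μ, q.1 ∈ Set.Icc xmin xmax) (hw2 : ∫ q, W2 q ∂μ = 1)
    {ψ κ c₁ c₂ : ℝ} (hκ : 0 < κ) (hψ : psiStar0 f < ψ) (hc : 0 < c₂)
    (hb : 0 < bb f κ c₁ c₂) (hR : Red μ ψ c₁ c₂ (AA f κ c₁ c₂) (bb f κ c₁ c₂) 0) : False := by
  have hψ0 : 0 < ψ := (psiStar0_nonneg f).trans_lt hψ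
  have hv1 : ∫ q, V1 q ∂μ = 1 := by simp [V1]
  obtain ⟨h1, h2⟩ := hR
  rw [KI_sigma_zero hxmin hsupp hw2] at h1
  rw [KI_sigma_zero hxmin hsupp hw2, KI_sigma_zero hxmin hsupp hv1] at h2
  have hbd : bb f κ c₁ c₂ * c₂ = d2F f κ c₁ c₂ := by unfold bb; field_simp
  have hA : AA f κ c₁ c₂ = d1F f κ c₁ c₂ - c₁ * bb f κ c₁ c₂ := by unfold AA bb; ring
  generalize bb f κ c₁ c₂ = b at *
  generalize AA f κ c₁ c₂ = A at *
  have h3 : A = -c₁ * b := by rw [h1]; field_simp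
  have h4 : d1F f κ c₁ c₂ = 0 := by linarith
  have h5 : d2F f κ c₁ c₂ ^ 2 = ψ := by
    rw [h3] at h2
    field_simp at h2
    rw [← hbd]; linarith
  have h6 : d2F f κ c₁ c₂ = Real.sqrt ψ := by
    rw [← h5, Real.sqrt_sq (d2F_nonneg hf h01 hκ c₁ c₂ hc.le)]
  obtain ⟨c0, hc0⟩ := exists_lt_of_ciInf_lt hψ
  have h7 : Fk f 0 c0 1 < Real.sqrt ψ := Real.lt_sqrt_of_sq_lt hc0
  obtain ⟨C, hC⟩ := Fk_growth hf h01
  set N := κ * C - Fk f κ c₁ c₂ + Real.sqrt ψ * c₂ with hN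
  have hd : 0 < Real.sqrt ψ - Fk f 0 c0 1 := by linarith
  set t := (|N| + 1) / (Real.sqrt ψ - Fk f 0 c0 1) with ht
  have ht0 : 0 ≤ t := by positivity
  have h8 := hC κ c0 t hκ ht0
  have h9 := Fk_subgrad hf h01 hκ c₁ c₂ (t * c0) t
  rw [h4, h6] at h9
  have h10 : t * (Real.sqrt ψ - Fk f 0 c0 1) = |N| + 1 := by rw [ht]; field_simp
  have := le_abs_self N
  nlinarith

section
variable {f : ℝ → ℝ} (hf : Continuous f) (h01 : ∀ x, f x ∈ Set.Icc (0:ℝ) 1)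
    {μ : Measure (ℝ × ℝ)} [IsProbabilityMeasure μ] {xmin xmax : ℝ} (hxmin : 0 < xmin)
    (hsupp : ∀ᵐ q ∂μ, q.1 ∈ Set.Icc xmin xmax) (hw2 : ∫ q, W2 q ∂μ = 1) (hW : Integrable W2 μ)

lemma cont_slice
    (hf : Continuous f) (h01 : ∀ x, f x ∈ Set.Icc (0:ℝ) 1) {κ : ℝ} (hκ : 0 < κ) :
    Continuous (fun q : ℝ × ℝ => d1F f κ q.1 q.2) ∧ Continuous (fun q : ℝ × ℝ => d2F f κ q.1 q.2) := by
  have hc : Continuous (fun q : ℝ × ℝ => ((κ, q.1, q.2) : ℝ × ℝ × ℝ)) := by fun_prop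
  constructor
  · exact (d1F_cont hf h01).comp_continuous hc (fun _ => hκ)
  · exact (d2F_cont hf h01).comp_continuous hc (fun _ => hκ)

lemma c2_lower
    (hxmin : 0 < xmin) (hsupp : ∀ᵐ q ∂μ, q.1 ∈ Set.Icc xmin xmax) (hw2 : ∫ q, W2 q ∂μ = 1) (hW : Integrable W2 μ) {ψ c₁ c₂ A b σ : ℝ} (hR : Red μ ψ c₁ c₂ A b σ) (hψ0 : 0 < ψ) (hadm : (b, σ) ∈ Adm) :
    ψ * (xmin ^ 2 / (b * xmax + σ) ^ 2) ≤ c₂ ^ 2 := by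
  have hv1 : ∫ q, V1 q ∂μ = 1 := by simp [V1]
  have hV : Integrable V1 μ := by unfold V1; exact integrable_const _
  obtain ⟨h1, h2⟩ := hR
  have a1 := KI_cs hxmin hsupp hW (fun q => sq_nonneg _) hw2 hadm
  have a2 := KI_lower hxmin hsupp hV (fun q => zero_le_one) hv1 hadm 2
  have a3 := mul_le_mul_of_nonneg_left a2 hψ0.le
  have a4 := mul_le_mul_of_nonneg_left a1 (sq_nonneg A)
  have a5 : c₁ ^ 2 = A ^ 2 * KI μ W2 1 1 b σ ^ 2 := by rw [← mul_pow, ← h1, neg_sq]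
  linarith

lemma exists_sol
    (hf : Continuous f) (h01 : ∀ x, f x ∈ Set.Icc (0:ℝ) 1) (hxmin : 0 < xmin) (hsupp : ∀ᵐ q ∂μ, q.1 ∈ Set.Icc xmin xmax) (hw2 : ∫ q, W2 q ∂μ = 1) (hW : Integrable W2 μ) {ψ κ : ℝ} (hκ : 0 < κ) (hψ : psiStar0 f < ψ) :
    ∃ c₁ c₂ s, 0 < c₂ ∧ 0 < s ∧ SolSysMu f μ ψ κ c₁ c₂ s := by
  have hψ0 : 0 < ψ := (psiStar0_nonneg f).trans_lt hψ
  have hr : 0 < Real.sqrt ψ := Real.sqrt_pos.mpr hψ0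
  have hr2 : Real.sqrt ψ ^ 2 = ψ := Real.sq_sqrt hψ0.le
  obtain ⟨M, w, g, st⟩ := exists_setup μ hsupp hW hw2
  obtain ⟨hc1, hc2⟩ := cont_slice hf h01 hκ
  obtain ⟨h, σ, hσ, hN, hσ1⟩ := exists_kkt
    (JJ (Fk f κ) (SS M) w g (Real.sqrt ψ)) (NN (d1F f κ) (d2F f κ) (SS M) w g (Real.sqrt ψ))
    (NN_continuous _ _ _ _ _ _ hc1 hc2 (d2F_zero hf h01 hκ))
    (JJ_subgrad _ _ _ _ _ _ _ (SS_symm M st.hM) st.hw (Fk_subgrad hf h01 hκ)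
      (d2F_zero hf h01 hκ) (fun a b hb => d2F_nonneg hf h01 hκ a b hb))
  obtain ⟨c₁, hc₁⟩ : ∃ c, C1 (SS M) w h = c := ⟨_, rfl⟩
  obtain ⟨c₂, hc₂⟩ : ∃ c, C2 (SS M) w h = c := ⟨_, rfl⟩
  have hc₂0 : 0 ≤ c₂ := by rw [← hc₂]; exact norm_nonneg _
  rw [NN_iff st hxmin hsupp _ _ _ _ h hc₁ hc₂] at hN
  change ∀ᵐ q ∂μ, (bb f κ c₁ c₂ * q.1 + σ) * h.fst q = -(Real.sqrt ψ * Real.sqrt q.1) ∧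
      (bb f κ c₁ c₂ * q.1 + σ) * h.snd q = -(AA f κ c₁ c₂ * Real.sqrt q.1 * q.2) at hN
  have hb0 : 0 ≤ bb f κ c₁ c₂ := bb_nonneg hf h01 hκ hc₂0
  have hadm : (bb f κ c₁ c₂, σ) ∈ Adm := by
    refine ⟨hb0, hσ, ?_⟩
    by_contra hcon
    have z1 : bb f κ c₁ c₂ = 0 := le_antisymm (by simp only at hcon; linarith) hb0
    have z2 : σ = 0 := le_antisymm (by simp only at hcon; linarith) hσ
    have : ∀ᵐ q ∂μ, False := by
      filter_upwards [hN, hsupp] with q a hq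
      have := Real.sqrt_pos.mpr (hxmin.trans_le hq.1)
      rw [z1, z2] at a
      have := a.1
      nlinarith [mul_pos hr (Real.sqrt_pos.mpr (hxmin.trans_le hq.1))]
    obtain ⟨q, hq⟩ := this.exists
    exact hq
  obtain ⟨v1, v2, v3⟩ := Hilb_vals st hxmin hsupp hW _ _ _ _ hadm h hN
  rw [hc₁] at v1
  rw [hc₁, hc₂, hr2] at v2
  rw [hr2] at v3
  have hR : Red μ ψ c₁ c₂ (AA f κ c₁ c₂) (bb f κ c₁ c₂) σ := ⟨by linarith, v2⟩
  have hxm : xmin ≤ xmax := by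
    obtain ⟨q, hq⟩ := hsupp.exists
    exact hq.1.trans hq.2
  have hpos : 0 < c₂ := by
    have hl := c2_lower hxmin hsupp hw2 hW hR hψ0 hadm
    have : 0 < bb f κ c₁ c₂ * xmax + σ := by
      have hm : 0 < min xmin 1 := lt_min hxmin one_pos
      exact (mul_pos hm hadm.2.2).trans_le (den_lower hxm hadm.1 hadm.2.1)
    have : 0 < c₂ ^ 2 := lt_of_lt_of_le (by positivity) hl
    rcases hc₂0.eq_or_lt with h0 | h0
    · rw [← h0] at this; simp at this
    · exact h0
  have hσ0 : σ ≠ 0 := by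
    intro h0
    rw [h0] at hR hadm
    exact nosol hf h01 hxmin hsupp hw2 hκ hψ hpos (by simpa using hadm.2.2) hR
  have hh1 : ‖h‖ = 1 := hσ1.resolve_left hσ0
  have hs : Real.sqrt ψ * (σ / Real.sqrt ψ) = σ := by field_simp
  refine ⟨c₁, c₂, σ / Real.sqrt ψ, hpos, div_pos (lt_of_le_of_ne hσ (Ne.symm hσ0)) hr, ?_⟩
  rw [sol_iff f μ hxmin hsupp hW _ _ _ _ _ (by rw [hs]; exact hadm), hs]
  refine ⟨hR, ?_⟩
  unfold Red3
  rw [← v3, hh1]; norm_num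

lemma vec_of_sol
    (hf : Continuous f) (h01 : ∀ x, f x ∈ Set.Icc (0:ℝ) 1) (hxmin : 0 < xmin) (hsupp : ∀ᵐ q ∂μ, q.1 ∈ Set.Icc xmin xmax) (hW : Integrable W2 μ) {M w g} (st : Setup μ M w g) {ψ κ c₁ c₂ s : ℝ} (hκ : 0 < κ) (hψ0 : 0 < ψ)
    (hc : 0 < c₂) (hs : 0 < s) (hsol : SolSysMu f μ ψ κ c₁ c₂ s) :
    ∃ h : HH μ, C1 (SS M) w h = c₁ ∧ C2 (SS M) w h = c₂ ∧ ‖h‖ = 1 ∧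
      NN (d1F f κ) (d2F f κ) (SS M) w g (Real.sqrt ψ) h = -((Real.sqrt ψ * s) • h) := by
  have hr : 0 < Real.sqrt ψ := Real.sqrt_pos.mpr hψ0
  have hr2 : Real.sqrt ψ ^ 2 = ψ := Real.sq_sqrt hψ0.le
  have hb0 : 0 ≤ bb f κ c₁ c₂ := bb_nonneg hf h01 hκ hc.le
  have hadm : (bb f κ c₁ c₂, Real.sqrt ψ * s) ∈ Adm :=
    ⟨hb0, by positivity, add_pos_of_nonneg_of_pos hb0 (mul_pos hr hs)⟩
  obtain ⟨⟨r1, r2⟩, r3⟩ := (sol_iff f μ hxmin hsupp hW _ _ _ _ _ hadm).mp hsol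
  obtain ⟨h, hh⟩ := exists_vec hxmin hsupp hW (Real.sqrt ψ) (AA f κ c₁ c₂) _ _ hadm
  obtain ⟨v1, v2, v3⟩ := Hilb_vals st hxmin hsupp hW _ _ _ _ hadm h hh
  rw [← r1, neg_neg] at v1
  rw [v1, hr2, ← r2] at v2
  unfold Red3 at r3
  rw [hr2, ← r3] at v3
  have v2' : C2 (SS M) w h = c₂ := by
    have h0 : 0 ≤ C2 (SS M) w h := norm_nonneg _
    exact (sq_eq_sq₀ h0 hc.le).mp (by linarith)
  refine ⟨h, v1, v2', ?_, ?_⟩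
  · exact (sq_eq_sq₀ (norm_nonneg _) zero_le_one).mp (by rw [v3]; norm_num)
  · rw [NN_iff st hxmin hsupp _ _ _ _ h v1 v2']
    exact hh

lemma unique_sol
    (hf : Continuous f) (h01 : ∀ x, f x ∈ Set.Icc (0:ℝ) 1) (hxmin : 0 < xmin) (hsupp : ∀ᵐ q ∂μ, q.1 ∈ Set.Icc xmin xmax) (hw2 : ∫ q, W2 q ∂μ = 1) (hW : Integrable W2 μ) {ψ κ c₁ c₂ s c₁' c₂' s' : ℝ} (hκ : 0 < κ) (hψ0 : 0 < ψ)
    (hc : 0 < c₂) (hs : 0 < s) (hsol : SolSysMu f μ ψ κ c₁ c₂ s)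
    (hc' : 0 < c₂') (hs' : 0 < s') (hsol' : SolSysMu f μ ψ κ c₁' c₂' s') :
    (c₁, c₂, s) = (c₁', c₂', s') := by
  have hr : 0 < Real.sqrt ψ := Real.sqrt_pos.mpr hψ0
  obtain ⟨M, w, g, st⟩ := exists_setup μ hsupp hW hw2
  obtain ⟨h, a1, a2, a3, a4⟩ := vec_of_sol hf h01 hxmin hsupp hW st hκ hψ0 hc hs hsol
  obtain ⟨h', b1, b2, b3, b4⟩ := vec_of_sol hf h01 hxmin hsupp hW st hκ hψ0 hc' hs' hsol'
  have e : h = h' := unique_kkt (JJ (Fk f κ) (SS M) w g (Real.sqrt ψ)) _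
    (JJ_subgrad _ _ _ _ _ _ _ (SS_symm M st.hM) st.hw (Fk_subgrad hf h01 hκ)
      (d2F_zero hf h01 hκ) (fun a b hb => d2F_nonneg hf h01 hκ a b hb)) h h' _ _
      (mul_pos hr hs) (mul_pos hr hs') a4 b4 a3 b3
  subst e
  have hne : h ≠ 0 := by intro h0; rw [h0, norm_zero] at a3; norm_num at a3
  have e2 : (Real.sqrt ψ * s) • h = (Real.sqrt ψ * s') • h := neg_injective (a4.symm.trans b4)
  have e3 := mul_left_cancel₀ hr.ne' (smul_left_injective ℝ hne e2)
  rw [← a1, ← a2, b1, b2, e3]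

end

section
variable {f : ℝ → ℝ} (hf : Continuous f) (h01 : ∀ x, f x ∈ Set.Icc (0:ℝ) 1)
    {μ : Measure (ℝ × ℝ)} [IsProbabilityMeasure μ] {xmin xmax : ℝ} (hxmin : 0 < xmin)
    (hsupp : ∀ᵐ q ∂μ, q.1 ∈ Set.Icc xmin xmax) (hw2 : ∫ q, W2 q ∂μ = 1) (hW : Integrable W2 μ)

lemma d1F_tendsto
    (hf : Continuous f) (h01 : ∀ x, f x ∈ Set.Icc (0:ℝ) 1) {α : Type*} {l : Filter α} {k a b : α → ℝ} {k0 a0 b0 : ℝ} (hk : 0 < k0)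
    (tk : Tendsto k l (𝓝 k0)) (ta : Tendsto a l (𝓝 a0)) (tb : Tendsto b l (𝓝 b0)) :
    Tendsto (fun x => d1F f (k x) (a x) (b x)) l (𝓝 (d1F f k0 a0 b0)) := by
  have hopen : {q : ℝ × ℝ × ℝ | 0 < q.1} ∈ 𝓝 ((k0, a0, b0) : ℝ × ℝ × ℝ) :=
    (isOpen_lt continuous_const continuous_fst).mem_nhds hk
  have h1 := ((d1F_cont hf h01).continuousAt hopen).tendsto
  exact Tendsto.comp (f := fun x => ((k x, a x, b x) : ℝ × ℝ × ℝ)) h1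
    (tk.prodMk_nhds (ta.prodMk_nhds tb))

lemma d2F_tendsto
    (hf : Continuous f) (h01 : ∀ x, f x ∈ Set.Icc (0:ℝ) 1) {α : Type*} {l : Filter α} {k a b : α → ℝ} {k0 a0 b0 : ℝ} (hk : 0 < k0)
    (tk : Tendsto k l (𝓝 k0)) (ta : Tendsto a l (𝓝 a0)) (tb : Tendsto b l (𝓝 b0)) :
    Tendsto (fun x => d2F f (k x) (a x) (b x)) l (𝓝 (d2F f k0 a0 b0)) := by
  have hopen : {q : ℝ × ℝ × ℝ | 0 < q.1} ∈ 𝓝 ((k0, a0, b0) : ℝ × ℝ × ℝ) :=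
    (isOpen_lt continuous_const continuous_fst).mem_nhds hk
  have h1 := ((d2F_cont hf h01).continuousAt hopen).tendsto
  exact Tendsto.comp (f := fun x => ((k x, a x, b x) : ℝ × ℝ × ℝ)) h1
    (tk.prodMk_nhds (ta.prodMk_nhds tb))

lemma Fk_tendsto
    (hf : Continuous f) (h01 : ∀ x, f x ∈ Set.Icc (0:ℝ) 1) {α : Type*} {l : Filter α} {k a b : α → ℝ} {k0 a0 b0 : ℝ}
    (tk : Tendsto k l (𝓝 k0)) (ta : Tendsto a l (𝓝 a0)) (tb : Tendsto b l (𝓝 b0)) :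
    Tendsto (fun x => Fk f (k x) (a x) (b x)) l (𝓝 (Fk f k0 a0 b0)) := by
  have h1 := (Fk_cont hf h01).tendsto ((k0, a0, b0) : ℝ × ℝ × ℝ)
  exact Tendsto.comp (f := fun x => ((k x, a x, b x) : ℝ × ℝ × ℝ)) h1
    (tk.prodMk_nhds (ta.prodMk_nhds tb))

lemma Red_limit
    (hxmin : 0 < xmin) (hsupp : ∀ᵐ q ∂μ, q.1 ∈ Set.Icc xmin xmax) (hW : Integrable W2 μ) {α : Type*} {l : Filter α} [l.NeBot] {p a c A b σ : α → ℝ}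
    {p0 a0 c0 A0 b0 σ0 : ℝ} (tp : Tendsto p l (𝓝 p0)) (ta : Tendsto a l (𝓝 a0))
    (tc : Tendsto c l (𝓝 c0)) (tA : Tendsto A l (𝓝 A0)) (tb : Tendsto b l (𝓝 b0))
    (tσ : Tendsto σ l (𝓝 σ0)) (hadm : (b0, σ0) ∈ Adm)
    (hev : ∀ᶠ x in l, (b x, σ x) ∈ Adm ∧ Red μ (p x) (a x) (c x) (A x) (b x) (σ x) ∧
      Red3 μ (p x) (A x) (b x) (σ x)) :
    Red μ p0 a0 c0 A0 b0 σ0 ∧ Red3 μ p0 A0 b0 σ0 := by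
  have hV : Integrable V1 μ := by unfold V1; exact integrable_const _
  have tbs : Tendsto (fun x => ((b x, σ x) : ℝ × ℝ)) l (𝓝[Adm] (b0, σ0)) :=
    tendsto_nhdsWithin_iff.mpr ⟨tb.prodMk_nhds tσ, hev.mono fun q h => h.1⟩
  have tKI : ∀ V : ℝ × ℝ → ℝ, Integrable V μ → ∀ i j, Tendsto (fun x => KI μ V i j (b x) (σ x)) l
      (𝓝 (KI μ V i j b0 σ0)) := by
    intro V hV i j
    have h1 : Tendsto (fun p : ℝ × ℝ => KI μ V i j p.1 p.2) (𝓝[Adm] (b0, σ0))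
      (𝓝 (KI μ V i j b0 σ0)) := KI_cont hxmin hsupp hV i j _ hadm
    exact Tendsto.comp (f := fun x => ((b x, σ x) : ℝ × ℝ)) h1 tbs
  refine ⟨⟨?_, ?_⟩, ?_⟩
  · exact tendsto_nhds_unique_of_eventuallyEq ta.neg (tA.mul (tKI W2 hW 1 1))
      (hev.mono fun q h => h.2.1.1)
  · exact tendsto_nhds_unique_of_eventuallyEq ((ta.pow 2).add (tc.pow 2))
      ((tp.mul (tKI V1 hV 2 2)).add ((tA.pow 2).mul (tKI W2 hW 2 2)))
      (hev.mono fun q h => h.2.1.2)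
  · exact tendsto_nhds_unique_of_eventuallyEq tendsto_const_nhds
      ((tp.mul (tKI V1 hV 1 2)).add ((tA.pow 2).mul (tKI W2 hW 1 2)))
      (hev.mono fun q h => h.2.2)

set_option maxHeartbeats 400000 in
lemma sol_bounds
    (hf : Continuous f) (h01 : ∀ x, f x ∈ Set.Icc (0:ℝ) 1) (hxmin : 0 < xmin) (hsupp : ∀ᵐ q ∂μ, q.1 ∈ Set.Icc xmin xmax) (hw2 : ∫ q, W2 q ∂μ = 1) (hW : Integrable W2 μ) {ψa ψb κa κb : ℝ} (hψa : 0 < ψa) (hκa : 0 < κa) (hκ : κa ≤ κb) :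
    ∃ R ε : ℝ, 0 < ε ∧ ∀ ψ κ c₁ c₂ s, ψ ∈ Icc ψa ψb → κ ∈ Icc κa κb → 0 < c₂ → 0 < s →
      SolSysMu f μ ψ κ c₁ c₂ s → c₁ ∈ Icc (-R) R ∧ c₂ ∈ Icc ε R ∧ s ∈ Icc 0 R ∧
        ε ≤ bb f κ c₁ c₂ + Real.sqrt ψ * s := by
  have hv1 : ∫ q, V1 q ∂μ = 1 := by simp [V1]
  have hV : Integrable V1 μ := by unfold V1; exact integrable_const _
  have hxm : xmin ≤ xmax := by
    obtain ⟨q, hq⟩ := hsupp.exists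
    exact hq.1.trans hq.2
  have hxp : 0 < xmax := hxmin.trans_le hxm
  set R0 := Real.sqrt xmax with hR0
  have hR0n : 0 ≤ R0 := Real.sqrt_nonneg _
  have hcomp : IsCompact (Icc κa κb ×ˢ (Icc (-R0) R0 ×ˢ Icc 0 R0)) :=
    isCompact_Icc.prod (isCompact_Icc.prod isCompact_Icc)
  obtain ⟨p0, hp0, hmin⟩ := hcomp.exists_isMinOn
    ⟨(κa, 0, 0), ⟨left_mem_Icc.mpr hκ, ⟨by simpa using hR0n, left_mem_Icc.mpr hR0n⟩⟩⟩
    (f := fun q : ℝ × ℝ × ℝ => Fk f q.1 q.2.1 q.2.2) (Fk_cont hf h01).continuousOn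
  set Fm := Fk f p0.1 p0.2.1 p0.2.2 with hFm
  have hFm0 : 0 < Fm := Fk_pos hf h01 (hκa.trans_le hp0.1.1) _ _
  obtain ⟨C, hC0, hC⟩ := d2F_le hf h01
  obtain ⟨C', hC'0, hC'⟩ := d1F_le hf h01
  set B := C / Fm with hB
  have hB0 : 0 ≤ B := by positivity
  set Ab := C' + R0 * B with hAb
  have hAb0 : 0 ≤ Ab := by positivity
  set Q := Real.sqrt (xmax * (|ψb| + Ab ^ 2)) with hQ
  have hQ0 : 0 ≤ Q := Real.sqrt_nonneg _
  set ε1 := Real.sqrt ψa * xmin / (B * xmax + Q + 1) with hε1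
  set ε2 := Real.sqrt (ψa * xmin) / (xmax + 1) with hε2
  have hra : 0 < Real.sqrt ψa := Real.sqrt_pos.mpr hψa
  have hε1p : 0 < ε1 := by positivity
  have hε2p : 0 < ε2 := by positivity
  refine ⟨max R0 (Q / Real.sqrt ψa), min ε1 ε2, lt_min hε1p hε2p, ?_⟩
  intro ψ κ c₁ c₂ s hψ hκ' hc hs hsol
  have hκ0 : 0 < κ := hκa.trans_le hκ'.1
  have hψ0 : 0 < ψ := hψa.trans_le hψ.1
  have hr : 0 < Real.sqrt ψ := Real.sqrt_pos.mpr hψ0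
  have hb0 : 0 ≤ bb f κ c₁ c₂ := bb_nonneg hf h01 hκ0 hc.le
  have hσ0 : 0 < Real.sqrt ψ * s := mul_pos hr hs
  have hadm : (bb f κ c₁ c₂, Real.sqrt ψ * s) ∈ Adm :=
    ⟨hb0, hσ0.le, add_pos_of_nonneg_of_pos hb0 hσ0⟩
  obtain ⟨hRed, hRed3⟩ := (sol_iff f μ hxmin hsupp hW _ _ _ _ _ hadm).mp hsol
  have hA : AA f κ c₁ c₂ = d1F f κ c₁ c₂ - c₁ * bb f κ c₁ c₂ := by unfold AA bb; ring
  have hW0 : ∀ q, 0 ≤ W2 q := fun q => sq_nonneg _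
  have hV0 : ∀ q, 0 ≤ V1 q := fun q => zero_le_one
  -- c bounds
  have hcc : c₁ ^ 2 + c₂ ^ 2 ≤ xmax := by
    have a1 := mul_le_mul_of_nonneg_left (KI_22_le hxmin hsupp hV hV0 hadm) hψ0.le
    have a2 := mul_le_mul_of_nonneg_left (KI_22_le hxmin hsupp hW hW0 hadm)
      (sq_nonneg (AA f κ c₁ c₂))
    have a3 := hRed.2
    unfold Red3 at hRed3
    nlinarith
  have hc1 : |c₁| ≤ R0 := Real.abs_le_sqrt (by nlinarith [sq_nonneg c₂])
  have hc2 : c₂ ≤ R0 := Real.le_sqrt_of_sq_le (by nlinarith [sq_nonneg c₁])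
  have hF : Fm ≤ Fk f κ c₁ c₂ :=
    hmin (show ((κ, c₁, c₂) : ℝ × ℝ × ℝ) ∈ _ from ⟨hκ', abs_le.mp hc1, hc.le, hc2⟩)
  have hbB : bb f κ c₁ c₂ ≤ B := by
    have h1 := hC κ c₁ c₂ hκ0 hc.le
    have h2 : c₂⁻¹ * d2F f κ c₁ c₂ ≤ c₂⁻¹ * (c₂ * C / Fk f κ c₁ c₂) :=
      mul_le_mul_of_nonneg_left h1 (inv_nonneg.mpr hc.le)
    have h3 : c₂⁻¹ * (c₂ * C / Fk f κ c₁ c₂) = C / Fk f κ c₁ c₂ := by field_simp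
    have h4 : C / Fk f κ c₁ c₂ ≤ C / Fm := by gcongr
    unfold bb
    linarith
  have hAA : |AA f κ c₁ c₂| ≤ Ab := by
    rw [hA]
    refine (abs_sub _ _).trans ?_
    rw [abs_mul, abs_of_nonneg hb0]
    have := hC' κ c₁ c₂ hκ0
    have : |c₁| * bb f κ c₁ c₂ ≤ R0 * B := by gcongr
    linarith
  have hAA2 : AA f κ c₁ c₂ ^ 2 ≤ Ab ^ 2 := by rw [← sq_abs]; gcongr
  have hlow := c2_lower hxmin hsupp hw2 hW hRed hψ0 hadm
  generalize AA f κ c₁ c₂ = A at *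
  generalize bb f κ c₁ c₂ = b at *
  have hσeq : Real.sqrt ψ * s = Real.sqrt ψ * s := rfl
  generalize hσ : Real.sqrt ψ * s = σ at *
  have hσ2 : σ ^ 2 ≤ xmax * (|ψb| + Ab ^ 2) := by
    have a1 := mul_le_mul_of_nonneg_left (KI_12_le hxmin hsupp hV hV0 hv1 hadm hσ0) hψ0.le
    have a2 := mul_le_mul_of_nonneg_left (KI_12_le hxmin hsupp hW hW0 hw2 hadm hσ0) (sq_nonneg A)
    unfold Red3 at hRed3
    have a3 : 1 ≤ (ψ + A ^ 2) * (xmax / σ ^ 2) := by linarith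
    have a4 : σ ^ 2 ≤ (ψ + A ^ 2) * xmax := by
      rwa [← mul_div_assoc, le_div_iff₀ (by positivity), one_mul] at a3
    have a5 : ψ ≤ |ψb| := hψ.2.trans (le_abs_self _)
    calc σ ^ 2 ≤ (ψ + A ^ 2) * xmax := a4
      _ ≤ (|ψb| + Ab ^ 2) * xmax := mul_le_mul_of_nonneg_right (add_le_add a5 hAA2) hxp.le
      _ = _ := mul_comm _ _
  have hσQ : σ ≤ Q := Real.le_sqrt_of_sq_le hσ2
  have hden : 0 < b * xmax + σ := by positivity
  have hrr : Real.sqrt ψa ≤ Real.sqrt ψ := Real.sqrt_le_sqrt hψ.1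
  refine ⟨?_, ⟨?_, hc2.trans (le_max_left _ _)⟩, ⟨hs.le, ?_⟩, ?_⟩
  · have := abs_le.mp (hc1.trans (le_max_left R0 (Q / Real.sqrt ψa)))
    exact this
  · refine (min_le_left _ _).trans ?_
    refine le_of_sq_le_sq ?_ hc.le
    refine le_trans ?_ hlow
    rw [hε1, div_pow, mul_pow, Real.sq_sqrt hψa.le, ← mul_div_assoc]
    have h1 := hψ.1
    have h2 : b * xmax + σ ≤ B * xmax + Q + 1 := by nlinarith
    gcongr
  · refine le_trans ?_ (le_max_right _ _)
    rw [le_div_iff₀ hra]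
    nlinarith
  · refine (min_le_right _ _).trans ?_
    have a1 := mul_le_mul_of_nonneg_left (KI_lower hxmin hsupp hV hV0 hv1 hadm 1) hψ0.le
    have a2 := mul_nonneg (sq_nonneg A) (KI_nonneg hxmin hsupp hW0 hadm 1 2)
    unfold Red3 at hRed3
    have a3 : ψ * (xmin ^ 1 / (b * xmax + σ) ^ 2) ≤ 1 := by linarith
    rw [← mul_div_assoc, div_le_one (by positivity), pow_one] at a3
    have a4 : Real.sqrt (ψa * xmin) ≤ b * xmax + σ := by
      refine Real.sqrt_le_iff.mpr ⟨hden.le, le_trans ?_ a3⟩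
      have := hψ.1
      gcongr
    rw [hε2, div_le_iff₀ (by positivity)]
    have e : (b + σ) * (xmax + 1) = b * xmax + σ + (b + σ * xmax) := by ring
    have e2 : 0 ≤ σ * xmax := mul_nonneg hσ0.le hxp.le
    rw [e]
    linarith

set_option maxHeartbeats 400000 in
lemma sol_cont
    (hf : Continuous f) (h01 : ∀ x, f x ∈ Set.Icc (0:ℝ) 1) (hxmin : 0 < xmin) (hsupp : ∀ᵐ q ∂μ, q.1 ∈ Set.Icc xmin xmax) (hw2 : ∫ q, W2 q ∂μ = 1) (hW : Integrable W2 μ) (sol : ℝ × ℝ → ℝ × ℝ × ℝ)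
    (hsol : ∀ q : ℝ × ℝ, 0 < q.2 → psiStar0 f < q.1 → 0 < (sol q).2.1 ∧ 0 < (sol q).2.2 ∧
      SolSysMu f μ q.1 q.2 (sol q).1 (sol q).2.1 (sol q).2.2) :
    ContinuousOn sol {q : ℝ × ℝ | 0 < q.2 ∧ psiStar0 f < q.1} := by
  have hV : Integrable V1 μ := by unfold V1; exact integrable_const _
  intro q0 hq0
  obtain ⟨hκ0, hψs⟩ := hq0
  have hψ0 : 0 < q0.1 := (psiStar0_nonneg f).trans_lt hψs
  set D : Set (ℝ × ℝ) := {q : ℝ × ℝ | 0 < q.2 ∧ psiStar0 f < q.1} with hD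
  obtain ⟨R, ε, hε, hbd⟩ := sol_bounds hf h01 hxmin hsupp hw2 hW (ψa := q0.1 / 2)
    (ψb := q0.1 + 1) (κa := q0.2 / 2) (κb := q0.2 + 1) (by positivity) (by positivity) (by linarith)
  have hev : ∀ᶠ q in 𝓝[D] q0, q.1 ∈ Icc (q0.1 / 2) (q0.1 + 1) ∧ q.2 ∈ Icc (q0.2 / 2) (q0.2 + 1) := by
    refine nhdsWithin_le_nhds ?_
    have e1 : ∀ᶠ q : ℝ × ℝ in 𝓝 q0, q.1 ∈ Icc (q0.1 / 2) (q0.1 + 1) :=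
      continuous_fst.continuousAt (Icc_mem_nhds (by linarith) (by linarith))
    have e2 : ∀ᶠ q : ℝ × ℝ in 𝓝 q0, q.2 ∈ Icc (q0.2 / 2) (q0.2 + 1) :=
      continuous_snd.continuousAt (Icc_mem_nhds (by linarith) (by linarith))
    exact e1.and e2
  have hK : IsCompact (Icc (-R) R ×ˢ (Icc ε R ×ˢ Icc 0 R)) :=
    isCompact_Icc.prod (isCompact_Icc.prod isCompact_Icc)
  show Tendsto sol (𝓝[D] q0) (𝓝 (sol q0))
  rw [tendsto_iff_ultrafilter]
  intro U hU
  have hUD : ∀ᶠ q in (U : Filter (ℝ × ℝ)), q ∈ D := hU self_mem_nhdsWithin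
  have hUb : ∀ᶠ q in (U : Filter (ℝ × ℝ)), (sol q).1 ∈ Icc (-R) R ∧ (sol q).2.1 ∈ Icc ε R ∧
      (sol q).2.2 ∈ Icc 0 R ∧
        ε ≤ bb f q.2 (sol q).1 (sol q).2.1 + Real.sqrt q.1 * (sol q).2.2 := by
    filter_upwards [hUD, hU hev] with q h1 h2
    obtain ⟨a1, a2, a3⟩ := hsol q h1.1 h1.2
    exact hbd _ _ _ _ _ h2.1 h2.2 a1 a2 a3
  obtain ⟨x, hxK, hx⟩ := hK.ultrafilter_le_nhds (U.map sol) (by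
    rw [le_principal_iff]
    change sol ⁻¹' _ ∈ (U : Filter (ℝ × ℝ))
    filter_upwards [hUb] with q h
    exact ⟨h.1, h.2.1, h.2.2.1⟩)
  have hT : Tendsto sol U (𝓝 x) := hx
  obtain ⟨c₁, c₂, s⟩ := x
  obtain ⟨-, hc₂, hs⟩ := hxK
  have hc : 0 < c₂ := hε.trans_le hc₂.1
  have hs0 : 0 ≤ s := hs.1
  have hid : Tendsto (fun q : ℝ × ℝ => q) U (𝓝 q0) := hU.trans nhdsWithin_le_nhds
  have tψ : Tendsto (fun q : ℝ × ℝ => q.1) U (𝓝 q0.1) := (continuous_fst.tendsto _).comp hid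
  have tκ : Tendsto (fun q : ℝ × ℝ => q.2) U (𝓝 q0.2) := (continuous_snd.tendsto _).comp hid
  have t1 : Tendsto (fun q => (sol q).1) U (𝓝 c₁) := (continuous_fst.tendsto _).comp hT
  have t2 : Tendsto (fun q => (sol q).2.1) U (𝓝 c₂) :=
    ((continuous_fst.comp continuous_snd).tendsto _).comp hT
  have t3 : Tendsto (fun q => (sol q).2.2) U (𝓝 s) :=
    ((continuous_snd.comp continuous_snd).tendsto _).comp hT
  have td1 : Tendsto (fun q => d1F f q.2 (sol q).1 (sol q).2.1) U (𝓝 (d1F f q0.2 c₁ c₂)) :=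
    d1F_tendsto hf h01 hκ0 tκ t1 t2
  have td2 : Tendsto (fun q => d2F f q.2 (sol q).1 (sol q).2.1) U (𝓝 (d2F f q0.2 c₁ c₂)) :=
    d2F_tendsto hf h01 hκ0 tκ t1 t2
  have tb : Tendsto (fun q => bb f q.2 (sol q).1 (sol q).2.1) U (𝓝 (bb f q0.2 c₁ c₂)) :=
    (t2.inv₀ hc.ne').mul td2
  have tA : Tendsto (fun q => AA f q.2 (sol q).1 (sol q).2.1) U (𝓝 (AA f q0.2 c₁ c₂)) :=
    td1.sub ((t1.mul (t2.inv₀ hc.ne')).mul td2)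
  have tσ : Tendsto (fun q => Real.sqrt q.1 * (sol q).2.2) U (𝓝 (Real.sqrt q0.1 * s)) :=
    ((Real.continuous_sqrt.tendsto _).comp tψ).mul t3
  have hb0 : 0 ≤ bb f q0.2 c₁ c₂ := bb_nonneg hf h01 hκ0 hc.le
  have hsum : ε ≤ bb f q0.2 c₁ c₂ + Real.sqrt q0.1 * s :=
    ge_of_tendsto (tb.add tσ) (hUb.mono fun q h => h.2.2.2)
  have hadm : (bb f q0.2 c₁ c₂, Real.sqrt q0.1 * s) ∈ Adm :=
    ⟨hb0, mul_nonneg (Real.sqrt_nonneg _) hs0, hε.trans_le hsum⟩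
  have hUsol : ∀ᶠ q in (U : Filter (ℝ × ℝ)),
      (bb f q.2 (sol q).1 (sol q).2.1, Real.sqrt q.1 * (sol q).2.2) ∈ Adm ∧
      Red μ q.1 (sol q).1 (sol q).2.1 (AA f q.2 (sol q).1 (sol q).2.1)
        (bb f q.2 (sol q).1 (sol q).2.1) (Real.sqrt q.1 * (sol q).2.2) ∧
      Red3 μ q.1 (AA f q.2 (sol q).1 (sol q).2.1)
        (bb f q.2 (sol q).1 (sol q).2.1) (Real.sqrt q.1 * (sol q).2.2) := by
    filter_upwards [hUD, hUb] with q h1 h2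
    obtain ⟨a1, a2, a3⟩ := hsol q h1.1 h1.2
    have had : (bb f q.2 (sol q).1 (sol q).2.1, Real.sqrt q.1 * (sol q).2.2) ∈ Adm :=
      ⟨bb_nonneg hf h01 h1.1 a1.le, mul_nonneg (Real.sqrt_nonneg _) a2.le, hε.trans_le h2.2.2.2⟩
    exact ⟨had, (sol_iff f μ hxmin hsupp hW _ _ _ _ _ had).mp a3⟩
  obtain ⟨hR, hR3⟩ := Red_limit hxmin hsupp hW tψ t1 t2 tA tb tσ hadm hUsol
  have hspos : 0 < s := by
    rcases hs0.eq_or_lt with h0 | h0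
    · exfalso
      rw [← h0, mul_zero] at hR hadm
      exact nosol hf h01 hxmin hsupp hw2 hκ0 hψs hc (by simpa using hadm.2.2) hR
    · exact h0
  have hfin := (sol_iff f μ hxmin hsupp hW _ _ _ _ _ hadm).mpr ⟨hR, hR3⟩
  obtain ⟨a1, a2, a3⟩ := hsol q0 hκ0 hψs
  have := unique_sol hf h01 hxmin hsupp hw2 hW hκ0 hψ0 hc hspos hfin a1 a2 a3
  rw [this] at hT
  exact hT

end

/-- For every `ψ > ψ↓(κ)` the system of equations has a unique solution
`(c₁(ψ,κ), c₂(ψ,κ), s(ψ,κ)) ∈ ℝ × (0,∞) × (0,∞)`; moreover the functions `T, c₁, c₂, s` are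
continuous on the domain `{(ψ,κ) : κ > 0, ψ > ψ↓(κ)}`. -/
theorem statement_7 (f : ℝ → ℝ) (hf : Continuous f) (hf01 : ∀ x, f x ∈ Set.Icc (0:ℝ) 1)
    (ρ : ℝ) (hρ : 0 < ρ) (hnd : NonDeg (fun x => f (ρ * x)))
    (μ : Measure (ℝ × ℝ)) [IsProbabilityMeasure μ]
    (xmin xmax : ℝ) (hxmin : 0 < xmin) (hxx : xmin ≤ xmax)
    (hsupp : ∀ᵐ q ∂μ, q.1 ∈ Set.Icc xmin xmax)
    (hw2 : ∫ q, q.2 ^ 2 ∂μ = 1) :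
    ∃ sol : ℝ × ℝ → ℝ × ℝ × ℝ,
      (∀ ψ κ : ℝ, 0 < κ → psiDown (fun x => f (ρ * x)) μ κ < ψ →
        (0 < (sol (ψ, κ)).2.1 ∧ 0 < (sol (ψ, κ)).2.2
          ∧ SolSysMu (fun x => f (ρ * x)) μ ψ κ
              (sol (ψ, κ)).1 (sol (ψ, κ)).2.1 (sol (ψ, κ)).2.2
          ∧ ∀ c₁ c₂ s : ℝ, 0 < c₂ → 0 < s →
              SolSysMu (fun x => f (ρ * x)) μ ψ κ c₁ c₂ s → (c₁, c₂, s) = sol (ψ, κ)))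
      ∧ ContinuousOn (fun q : ℝ × ℝ => (sol q).1)
          {q : ℝ × ℝ | 0 < q.2 ∧ psiDown (fun x => f (ρ * x)) μ q.2 < q.1}
      ∧ ContinuousOn (fun q : ℝ × ℝ => (sol q).2.1)
          {q : ℝ × ℝ | 0 < q.2 ∧ psiDown (fun x => f (ρ * x)) μ q.2 < q.1}
      ∧ ContinuousOn (fun q : ℝ × ℝ => (sol q).2.2)
          {q : ℝ × ℝ | 0 < q.2 ∧ psiDown (fun x => f (ρ * x)) μ q.2 < q.1}
      ∧ ContinuousOn (fun q : ℝ × ℝ =>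
            Tval (fun x => f (ρ * x)) q.1 q.2 (sol q).1 (sol q).2.1 (sol q).2.2)
          {q : ℝ × ℝ | 0 < q.2 ∧ psiDown (fun x => f (ρ * x)) μ q.2 < q.1} := by
  set f' : ℝ → ℝ := fun x => f (ρ * x) with hf'
  have hfc : Continuous f' := by rw [hf']; fun_prop
  have h01 : ∀ x, f' x ∈ Set.Icc (0:ℝ) 1 := fun x => hf01 (ρ * x)
  have hw2' : ∫ q, W2 q ∂μ = 1 := hw2
  have hW : Integrable W2 μ := by
    by_contra hcon
    rw [integral_undef hcon] at hw2'
    norm_num at hw2'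
  have hex : ∀ q : ℝ × ℝ, ∃ x : ℝ × ℝ × ℝ, 0 < q.2 → psiStar0 f' < q.1 →
      0 < x.2.1 ∧ 0 < x.2.2 ∧ SolSysMu f' μ q.1 q.2 x.1 x.2.1 x.2.2 := by
    intro q
    by_cases h : 0 < q.2 ∧ psiStar0 f' < q.1
    · obtain ⟨c₁, c₂, s, h1, h2, h3⟩ := exists_sol hfc h01 hxmin hsupp hw2' hW h.1 h.2
      exact ⟨(c₁, c₂, s), fun _ _ => ⟨h1, h2, h3⟩⟩
    · exact ⟨(0, 0, 0), fun a b => absurd ⟨a, b⟩ h⟩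
  choose sol hsol using hex
  have hle : ∀ κ, psiStar0 f' ≤ psiDown f' μ κ := fun κ =>
    (le_max_left _ _).trans (le_max_left _ _)
  have hsub : {q : ℝ × ℝ | 0 < q.2 ∧ psiDown f' μ q.2 < q.1} ⊆
      {q : ℝ × ℝ | 0 < q.2 ∧ psiStar0 f' < q.1} := fun q hq => ⟨hq.1, (hle _).trans_lt hq.2⟩
  have hcont : ContinuousOn sol {q : ℝ × ℝ | 0 < q.2 ∧ psiDown f' μ q.2 < q.1} :=
    (sol_cont hfc h01 hxmin hsupp hw2' hW sol hsol).mono hsub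
  have k1 := continuous_fst.comp_continuousOn hcont
  have k2 := (continuous_fst.comp continuous_snd).comp_continuousOn hcont
  have k3 := (continuous_snd.comp continuous_snd).comp_continuousOn hcont
  refine ⟨sol, ?_, k1, k2, k3, ?_⟩
  · intro ψ κ hκ hψ
    have hψ' := (hle κ).trans_lt hψ
    obtain ⟨a1, a2, a3⟩ := hsol (ψ, κ) hκ hψ'
    refine ⟨a1, a2, a3, ?_⟩
    intro c₁ c₂ s hc hs h
    exact unique_sol hfc h01 hxmin hsupp hw2' hW hκ ((psiStar0_nonneg f').trans_lt hψ') hc hs h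
      a1 a2 a3
  · have e0 : ContinuousOn (fun q : ℝ × ℝ => Fk f' q.2 (sol q).1 (sol q).2.1)
        {q : ℝ × ℝ | 0 < q.2 ∧ psiDown f' μ q.2 < q.1} :=
      fun q hq => Fk_tendsto hfc h01 continuous_snd.continuousWithinAt (k1 q hq) (k2 q hq)
    have e1 : ContinuousOn (fun q : ℝ × ℝ => d1F f' q.2 (sol q).1 (sol q).2.1)
        {q : ℝ × ℝ | 0 < q.2 ∧ psiDown f' μ q.2 < q.1} := 
      fun q hq => d1F_tendsto hfc h01 hq.1 continuous_snd.continuousWithinAt (k1 q hq) (k2 q hq)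
    have e2 : ContinuousOn (fun q : ℝ × ℝ => d2F f' q.2 (sol q).1 (sol q).2.1)
        {q : ℝ × ℝ | 0 < q.2 ∧ psiDown f' μ q.2 < q.1} := 
      fun q hq => d2F_tendsto hfc h01 hq.1 continuous_snd.continuousWithinAt (k1 q hq) (k2 q hq)
    have e3 : ContinuousOn (fun q : ℝ × ℝ => (Real.sqrt q.1)⁻¹)
        {q : ℝ × ℝ | 0 < q.2 ∧ psiDown f' μ q.2 < q.1} := by
      refine ContinuousOn.inv₀ (by fun_prop) ?_
      intro q hq
      exact (Real.sqrt_pos.mpr ((psiStar0_nonneg f').trans_lt (hsub hq).2)).ne'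
    exact (e3.mul ((e0.sub (k1.mul e1)).sub (k2.mul e2))).sub k3

end MaxMargin
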